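/- arXiv:math/0502345 — 2 statements merged into one kernel-verified Lean document; each statement's English description precedes it below -/
import Mathlib

section
/- Let K and L be convex bodies in R^m (m ≥ 2) such that the surface area measure of K is dominated by that of L, i.e., S(K,U) ≤ S(L,U) for every Borel set U ⊆ S^{m−1}. Then Vol(K) ≤ Vol(L). -/
open MeasureTheory Set
open scoped ENNReal Pointwise RealInnerProductSpace Topology

noncomputable section

abbrev Euc (m : ℕ) : Type := EuclideanSpace ℝ (Fin m)

/-- A convex body: compact convex set with nonempty interior. -/
def IsConvexBody {m : ℕ} (K : Set (Euc m)) : Prop :=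
  Convex ℝ K ∧ IsCompact K ∧ (interior K).Nonempty

/-- A (compact convex) polytope: convex hull of a finite set. -/
def IsPolytope {m : ℕ} (P : Set (Euc m)) : Prop :=
  ∃ s : Finset (Euc m), P = convexHull ℝ (s : Set (Euc m))

def unitSphere (m : ℕ) : Set (Euc m) := Metric.sphere 0 1

/-- `n` is an outward unit normal to `K` at the boundary point `x`. -/
def IsOutwardNormalAt {m : ℕ} (K : Set (Euc m)) (x n : Euc m) : Prop :=
  x ∈ frontier K ∧ ‖n‖ = 1 ∧ ∀ y ∈ K, ⟪y - x, n⟫ ≤ 0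

open Classical in
/-- The (set-valued choice of) Gauss map of `K`. -/
def gaussMap {m : ℕ} (K : Set (Euc m)) (x : Euc m) : Euc m :=
  if h : ∃ n, IsOutwardNormalAt K x n then h.choose else 0

/-- The surface area measure of `K`: the pushforward under the Gauss map of the
`(m-1)`-dimensional Hausdorff measure on the boundary of `K`. -/
def surfMeasure {m : ℕ} (K : Set (Euc m)) : Measure (Euc m) :=
  Measure.map (gaussMap K) (μH[(m : ℝ) - 1].restrict (frontier K))

/-- The face of `P` in direction `n`. -/
def faceIn {m : ℕ} (P : Set (Euc m)) (n : Euc m) : Set (Euc m) :=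
  {x ∈ P | ∀ y ∈ P, ⟪y, n⟫ ≤ ⟪x, n⟫}

/-- The `(m-1)`-dimensional volume of the face of `P` in direction `n`. -/
def faceArea {m : ℕ} (P : Set (Euc m)) (n : Euc m) : ℝ≥0∞ :=
  μH[(m : ℝ) - 1] (faceIn P n)

/-- `n` is the outward unit normal to a facet ((m-1)-dimensional face) of `P`. -/
def IsFacetNormal {m : ℕ} (P : Set (Euc m)) (n : Euc m) : Prop :=
  ‖n‖ = 1 ∧ 0 < faceArea P n

/-- One-dimensional Brunn–Minkowski inequality for compact sets. -/
lemma Real.volume_add_volume_le_of_isCompact {A B C : Set ℝ} (hA : IsCompact A) (hB : IsCompact B)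
    (hA0 : A.Nonempty) (hB0 : B.Nonempty) (h : A + B ⊆ C) :
    volume A + volume B ≤ volume C := by
  have ha := hA.sSup_mem hA0
  have hb := hB.sInf_mem hB0
  set a := sSup A
  set b := sInf B
  have hd : AEDisjoint volume ((fun x => x + b) '' A) ((fun x => a + x) '' B) := by
    refine measure_mono_null (t := {a + b}) ?_ (by simp)
    rintro _ ⟨⟨x, hx, rfl⟩, ⟨y, hy, hxy⟩⟩
    have h1 : x ≤ a := le_csSup hA.bddAbove hx
    have h2 : b ≤ y := csInf_le hB.bddBelow hy
    simp only [mem_singleton_iff] at hxy ⊢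
    linarith
  have hm : MeasurableSet ((fun x => a + x) '' B) :=
    (hB.image (by fun_prop)).measurableSet
  calc volume A + volume B
      = volume ((fun x => x + b) '' A) + volume ((fun x => a + x) '' B) := by
        simp
    _ = volume ((fun x => x + b) '' A ∪ (fun x => a + x) '' B) :=
        (measure_union₀ hm.nullMeasurableSet hd).symm
    _ ≤ volume C := by
        refine measure_mono (union_subset ?_ ?_)
        · rintro _ ⟨x, hx, rfl⟩
          exact h (add_mem_add hx hb)
        · rintro _ ⟨x, hx, rfl⟩
          exact h (add_mem_add ha hx)

/-- One-dimensional Brunn–Minkowski inequality for measurable sets. -/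
lemma Real.volume_add_volume_le {A B C : Set ℝ} (hA : MeasurableSet A) (hB : MeasurableSet B)
    (hA0 : A.Nonempty) (hB0 : B.Nonempty) (h : A + B ⊆ C) :
    volume A + volume B ≤ volume C := by
  obtain ⟨a, ha⟩ := hA0
  obtain ⟨b, hb⟩ := hB0
  rw [hA.measure_eq_iSup_isCompact, hB.measure_eq_iSup_isCompact]
  simp_rw [iSup_and']
  refine ENNReal.biSup_add_biSup_le' ⟨∅, by simp⟩ ⟨∅, by simp⟩ ?_
  rintro S ⟨hSA, hS⟩ T ⟨hTB, hT⟩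
  calc volume S + volume T ≤ volume (insert a S) + volume (insert b T) :=
        add_le_add (measure_mono (subset_insert _ _)) (measure_mono (subset_insert _ _))
    _ ≤ volume C := Real.volume_add_volume_le_of_isCompact (hS.insert a) (hT.insert b)
        (insert_nonempty _ _) (insert_nonempty _ _)
        ((add_subset_add (insert_subset ha hSA) (insert_subset hb hTB)).trans h)

/-- A Prékopa–Leindler type inequality on the line for functions with supremum one. -/
lemma lintegral_add_lintegral_le_of_min_le {f g h : ℝ → ℝ} (hf : Measurable f) (hg : Measurable g)
    (hh : Measurable h) (f0 : ∀ x, 0 ≤ f x) (g0 : ∀ x, 0 ≤ g x) (h0 : ∀ x, 0 ≤ h x)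
    (f1 : ∀ x, f x ≤ 1) (g1 : ∀ x, g x ≤ 1) (hf1 : ∀ t < 1, ∃ x, t < f x)
    (hg1 : ∀ t < 1, ∃ x, t < g x)
    (H : ∀ x y, 0 < f x → 0 < g y → min (f x) (g y) ≤ h (x + y)) :
    (∫⁻ x, ENNReal.ofReal (f x)) + ∫⁻ x, ENNReal.ofReal (g x) ≤ ∫⁻ x, ENNReal.ofReal (h x) := by
  rw [lintegral_eq_lintegral_meas_lt _ (.of_forall f0) hf.aemeasurable,
    lintegral_eq_lintegral_meas_lt _ (.of_forall g0) hg.aemeasurable,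
    lintegral_eq_lintegral_meas_lt _ (.of_forall h0) hh.aemeasurable]
  rw [← lintegral_add_left]
  swap
  · exact Antitone.measurable fun s t hst => measure_mono fun x (hx : t < f x) => hst.trans_lt hx
  refine setLIntegral_mono' measurableSet_Ioi fun t (ht : 0 < t) => ?_
  rcases lt_or_ge t 1 with h1 | h1
  · refine Real.volume_add_volume_le (measurableSet_lt measurable_const hf)
      (measurableSet_lt measurable_const hg) (hf1 t h1) (hg1 t h1) ?_
    rintro _ ⟨x, hx, y, hy, rfl⟩
    exact (lt_min hx hy).trans_le (H x y (ht.trans hx) (ht.trans hy))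
  · have e1 : {a | t < f a} = ∅ := by
      ext x; simpa using (f1 x).trans h1
    have e2 : {a | t < g a} = ∅ := by
      ext x; simpa using (g1 x).trans h1
    simp [e1, e2]

lemma add_pow_div_le {n : ℕ} {a b α β : ℝ} (ha : 0 ≤ a) (hb : 0 ≤ b) (hα : 0 < α) (hβ : 0 < β) :
    (a + b) ^ (n + 1) / (α + β) ^ n ≤ a ^ (n + 1) / α ^ n + b ^ (n + 1) / β ^ n := by
  have hs : 0 < α + β := by positivity
  have h := (convexOn_pow (𝕜 := ℝ) (n + 1)).2 (mem_Ici.2 (show 0 ≤ a / α by positivity))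
    (mem_Ici.2 (show 0 ≤ b / β by positivity)) (show 0 ≤ α / (α + β) by positivity)
    (show 0 ≤ β / (α + β) by positivity) (by field_simp)
  simp only [smul_eq_mul] at h
  have e1 : α / (α + β) * (a / α) + β / (α + β) * (b / β) = (a + b) / (α + β) := by
    field_simp
  rw [e1] at h
  have h2 := mul_le_mul_of_nonneg_left h hs.le
  calc _ = (α + β) * ((a + b) / (α + β)) ^ (n + 1) := by
        rw [div_pow, pow_succ (α + β)]; field_simp
    _ ≤ _ := h2
    _ = _ := by
        rw [div_pow, div_pow, pow_succ α, pow_succ β]; field_simp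

section Slices

variable {n : ℕ}

/-- The slice of a subset of `ℝ^(n+1)` at first coordinate `x`. -/
def slice (A : Set (Fin (n + 1) → ℝ)) (x : ℝ) : Set (Fin n → ℝ) := {y | Fin.cons x y ∈ A}

lemma slice_subset (A : Set (Fin (n + 1) → ℝ)) (x : ℝ) : slice A x ⊆ Fin.tail '' A :=
  fun y hy => ⟨_, hy, Fin.tail_cons (α := fun _ => ℝ) x y⟩

lemma isCompact_slice {A : Set (Fin (n + 1) → ℝ)} (hA : IsCompact A) (x : ℝ) :
    IsCompact (slice A x) := by
  refine (hA.image (f := Fin.tail) (by unfold Fin.tail; fun_prop)).of_isClosed_subset ?_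
    (slice_subset A x)
  exact hA.isClosed.preimage (by fun_prop)

lemma volume_eq_lintegral_slice {A : Set (Fin (n + 1) → ℝ)} (hA : MeasurableSet A) :
    Measurable (fun x => volume (slice A x)) ∧ volume A = ∫⁻ x, volume (slice A x) := by
  have hmp := (volume_preserving_piFinSuccAbove (fun _ : Fin (n + 1) => ℝ) 0).symm
  have e : volume A = volume ((MeasurableEquiv.piFinSuccAbove (fun _ : Fin (n + 1) => ℝ) 0).symm ⁻¹' A) :=
    (hmp.measure_preimage hA.nullMeasurableSet).symm
  have hm := hmp.measurable hA
  have key (x : ℝ) : slice A x = Prod.mk x ⁻¹'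
      ((MeasurableEquiv.piFinSuccAbove (fun _ : Fin (n + 1) => ℝ) 0).symm ⁻¹' A) := by
    ext y
    simp only [mem_preimage, MeasurableEquiv.piFinSuccAbove_symm_apply, Fin.insertNthEquiv_zero]
    rfl
  simp_rw [key]
  refine ⟨measurable_measure_prodMk_left hm, ?_⟩
  rw [e, Measure.volume_eq_prod, Measure.prod_apply hm]

lemma exists_isLUB_slice {A : Set (Fin (n + 1) → ℝ)} (hA : IsCompact A) (h0 : 0 < volume.real A) :
    ∃ s > 0, IsLUB (range fun x => volume.real (slice A x)) s ∧
      ∫⁻ x, ENNReal.ofReal (volume.real (slice A x) / s) = ENNReal.ofReal (volume.real A / s) := by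
  have hb : BddAbove (range fun x => volume.real (slice A x)) := by
    refine ⟨volume.real (Fin.tail '' A), ?_⟩
    rintro _ ⟨x, rfl⟩
    exact measureReal_mono (slice_subset A x)
      (hA.image (f := Fin.tail) (by unfold Fin.tail; fun_prop)).measure_lt_top.ne
  have hlub := isLUB_csSup (range_nonempty _) hb
  have hlint : ∫⁻ x, ENNReal.ofReal (volume.real (slice A x)) = volume A := by
    rw [(volume_eq_lintegral_slice hA.measurableSet).2]
    simp_rw [ofReal_measureReal (isCompact_slice hA _).measure_lt_top.ne]
  refine ⟨_, ?_, hlub, ?_⟩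
  · refine lt_of_le_of_ne ((measureReal_nonneg).trans (hlub.1 (mem_range_self 0))) fun h => ?_
    have hz (x : ℝ) : volume.real (slice A x) = 0 :=
      le_antisymm (h ▸ hlub.1 (mem_range_self x)) measureReal_nonneg
    simp only [hz, ENNReal.ofReal_zero, lintegral_zero] at hlint
    simp [Measure.real, ← hlint] at h0
  · simp_rw [div_eq_mul_inv, ENNReal.ofReal_mul measureReal_nonneg]
    rw [lintegral_mul_const' _ _ (by simp), hlint, ofReal_measureReal hA.measure_lt_top.ne]

end Slices

lemma volume_real_le_of_add_subset {G : Type*} [AddGroup G] [MeasureSpace G]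
    [TopologicalSpace G] [ContinuousAdd G] [MeasurableAdd G]
    [(volume : Measure G).IsAddLeftInvariant] [IsFiniteMeasureOnCompacts (volume : Measure G)]
    {A B C : Set G} (hC : IsCompact C) (hA0 : A.Nonempty) (h : A + B ⊆ C) :
    volume.real B ≤ volume.real C := by
  obtain ⟨a, ha⟩ := hA0
  have h1 : a +ᵥ B ⊆ C := by
    rintro _ ⟨b, hb, rfl⟩
    exact h (add_mem_add ha hb)
  calc volume.real B = volume.real (a +ᵥ B) := by simp [Measure.real, measure_vadd]
    _ ≤ _ := measureReal_mono h1 hC.measure_lt_top.ne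

/-- The **Brunn–Minkowski inequality** for compact sets. -/
theorem brunn_minkowski_pi (n : ℕ) : ∀ {A B C : Set (Fin (n + 1) → ℝ)}, IsCompact A → IsCompact B →
    IsCompact C → A.Nonempty → B.Nonempty → A + B ⊆ C → ∀ {a b : ℝ}, 0 ≤ a → 0 ≤ b →
    a ^ (n + 1) ≤ volume.real A → b ^ (n + 1) ≤ volume.real B →
    (a + b) ^ (n + 1) ≤ volume.real C := by
  induction n with
  | zero =>
    intro A B C hA hB hC hA0 hB0 h a b ha hb hAa hBb
    have hmp := (volume_preserving_funUnique (Fin 1) ℝ).symm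
    have e {S : Set (Fin 1 → ℝ)} (hS : IsCompact S) : volume S =
        volume ((MeasurableEquiv.funUnique (Fin 1) ℝ).symm ⁻¹' S) :=
      (hmp.measure_preimage hS.measurableSet.nullMeasurableSet).symm
    have key := Real.volume_add_volume_le (hmp.measurable hA.measurableSet)
      (hmp.measurable hB.measurableSet)
      (hA0.preimage (MeasurableEquiv.funUnique (Fin 1) ℝ).symm.surjective)
      (hB0.preimage (MeasurableEquiv.funUnique (Fin 1) ℝ).symm.surjective)
      (C := (MeasurableEquiv.funUnique (Fin 1) ℝ).symm ⁻¹' C) (by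
        rintro _ ⟨x, hx, y, hy, rfl⟩
        exact h (add_mem_add hx hy))
    rw [← e hA, ← e hB, ← e hC] at key
    have := ENNReal.toReal_mono hC.measure_lt_top.ne key
    rw [ENNReal.toReal_add hA.measure_lt_top.ne hB.measure_lt_top.ne] at this
    simp only [Measure.real, zero_add, pow_one] at *
    linarith
  | succ n ih =>
    intro A B C hA hB hC hA0 hB0 h a b ha hb hAa hBb
    rcases ha.eq_or_lt with rfl | ha
    · rw [zero_add]
      exact hBb.trans (volume_real_le_of_add_subset hC hA0 h)
    rcases hb.eq_or_lt with rfl | hb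
    · rw [add_zero]
      exact hAa.trans (volume_real_le_of_add_subset hC hB0 (add_comm A B ▸ h))
    obtain ⟨s, s0, hs, hsA⟩ := exists_isLUB_slice hA ((by positivity : (0 : ℝ) < _).trans_le hAa)
    obtain ⟨r, r0, hr, hrB⟩ := exists_isLUB_slice hB ((by positivity : (0 : ℝ) < _).trans_le hBb)
    set α := s ^ ((n + 1 : ℕ) : ℝ)⁻¹
    set β := r ^ ((n + 1 : ℕ) : ℝ)⁻¹
    have hα : 0 < α := by positivity
    have hβ : 0 < β := by positivity
    have hαs : α ^ (n + 1) = s := Real.rpow_inv_natCast_pow s0.le (by simp)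
    have hβr : β ^ (n + 1) = r := Real.rpow_inv_natCast_pow r0.le (by simp)
    have hγ : 0 < (α + β) ^ (n + 1) := by positivity
    have meas {S : Set (Fin (n + 2) → ℝ)} (hS : IsCompact S) (t : ℝ) :
        Measurable fun x => volume.real (slice S x) / t :=
      (volume_eq_lintegral_slice hS.measurableSet).1.ennreal_toReal.div_const t
    have key := lintegral_add_lintegral_le_of_min_le (meas hA s) (meas hB r)
      (meas hC ((α + β) ^ (n + 1))) (fun _ => by positivity) (fun _ => by positivity)
      (fun _ => by positivity) (fun x => (div_le_one s0).2 (hs.1 (mem_range_self x)))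
      (fun x => (div_le_one r0).2 (hr.1 (mem_range_self x)))
      (fun t ht => by
        obtain ⟨_, ⟨x, rfl⟩, hx⟩ := (lt_isLUB_iff hs).1 (show t * s < s by nlinarith)
        exact ⟨x, (lt_div_iff₀ s0).2 hx⟩)
      (fun t ht => by
        obtain ⟨_, ⟨x, rfl⟩, hx⟩ := (lt_isLUB_iff hr).1 (show t * r < r by nlinarith)
        exact ⟨x, (lt_div_iff₀ r0).2 hx⟩)
      (by
        intro x y hx hy
        set μ := min (volume.real (slice A x) / s) (volume.real (slice B y) / r)
        have hμ : 0 < μ := lt_min hx hy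
        set w := μ ^ ((n + 1 : ℕ) : ℝ)⁻¹
        have hw : w ^ (n + 1) = μ := Real.rpow_inv_natCast_pow hμ.le (by simp)
        have ne {S : Set (Fin (n + 2) → ℝ)} {z q : ℝ} (hz : 0 < volume.real (slice S z) / q) :
            (slice S z).Nonempty := by
          by_contra hne
          simp [not_nonempty_iff_eq_empty.1 hne] at hz
        have := ih (isCompact_slice hA x) (isCompact_slice hB y) (isCompact_slice hC (x + y))
          (ne hx) (ne hy) (by
            rintro _ ⟨u, hu, v, hv, rfl⟩
            have := h (add_mem_add hu hv)
            have e : (Fin.cons x u + Fin.cons y v : Fin (n + 2) → ℝ) = Fin.cons (x + y) (u + v) := by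
              ext i
              refine Fin.cases ?_ (fun i => ?_) i <;> simp
            rw [e] at this
            exact this) (a := w * α) (b := w * β) (by positivity) (by positivity)
          (by rw [mul_pow, hw, hαs]; exact (le_div_iff₀ s0).1 (min_le_left _ _))
          (by rw [mul_pow, hw, hβr]; exact (le_div_iff₀ r0).1 (min_le_right _ _))
        rw [← mul_add, mul_pow, hw] at this
        exact (le_div_iff₀ hγ).2 this)
    rw [hsA, hrB, ← ENNReal.ofReal_add (by positivity) (by positivity)] at key
    simp_rw [div_eq_mul_inv _ ((α + β) ^ (n + 1)), ENNReal.ofReal_mul measureReal_nonneg] at key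
    rw [lintegral_mul_const' _ _ (by simp)] at key
    simp_rw [ofReal_measureReal (isCompact_slice hC _).measure_lt_top.ne] at key
    rw [← (volume_eq_lintegral_slice hC.measurableSet).2,
      ← ofReal_measureReal hC.measure_lt_top.ne, ← ENNReal.ofReal_mul measureReal_nonneg,
      ENNReal.ofReal_le_ofReal_iff (by positivity), ← div_eq_mul_inv] at key
    have h1 := add_pow_div_le (n := n + 1) ha.le hb.le hα hβ
    rw [hαs, hβr] at h1
    have h2 : (a + b) ^ (n + 2) / (α + β) ^ (n + 1) ≤ volume.real C / (α + β) ^ (n + 1) :=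
      h1.trans (le_trans (by gcongr) key)
    exact (div_le_div_iff_of_pos_right hγ).1 h2

/-- The **Brunn–Minkowski inequality** for compact sets in Euclidean space. -/
theorem brunn_minkowski {n : ℕ} {A B : Set (Euc (n + 1))} (hA : IsCompact A) (hB : IsCompact B)
    (hA0 : A.Nonempty) (hB0 : B.Nonempty) {a b : ℝ} (ha : 0 ≤ a) (hb : 0 ≤ b)
    (hAa : a ^ (n + 1) ≤ volume.real A) (hBb : b ^ (n + 1) ≤ volume.real B) :
    (a + b) ^ (n + 1) ≤ volume.real (A + B) := by
  have hmp := PiLp.volume_preserving_toLp (Fin (n + 1))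
  have hcont : Continuous (@WithLp.ofLp 2 (Fin (n + 1) → ℝ)) := PiLp.continuous_ofLp 2 _
  have e {S : Set (Euc (n + 1))} (hS : IsCompact S) :
      volume.real S = volume.real (WithLp.ofLp '' S) := by
    rw [Measure.real, Measure.real, ← hmp.measure_preimage hS.measurableSet.nullMeasurableSet]
    congr 2
    ext x
    exact ⟨fun hx => ⟨_, hx, rfl⟩, by rintro ⟨y, hy, rfl⟩; exact hy⟩
  rw [e hA] at hAa
  rw [e hB] at hBb
  rw [e (hA.add hB)]
  refine brunn_minkowski_pi n (hA.image hcont) (hB.image hcont) ((hA.add hB).image hcont)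
    (hA0.image _) (hB0.image _) ?_ ha hb hAa hBb
  rintro _ ⟨_, ⟨x, hx, rfl⟩, _, ⟨y, hy, rfl⟩, rfl⟩
  exact ⟨x + y, add_mem_add hx hy, rfl⟩

/-- `Q` is the orthogonal projection along the unit vector `e`, in orthonormal coordinates of the
orthogonal complement of `e`. -/
structure IsSplitting {n : ℕ} (e : Euc (n + 1)) (Q : Euc (n + 1) →L[ℝ] Euc n) : Prop where
  inner_eq : ∀ p q, ⟪p, q⟫ = ⟪Q p, Q q⟫ + ⟪p, e⟫ * ⟪q, e⟫
  measurePreserving : MeasurePreserving (fun p => (Q p, ⟪p, e⟫)) volume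
    ((volume : Measure (Euc n)).prod (volume : Measure ℝ))

lemma exists_isSplitting {n : ℕ} (e : Euc (n + 1)) (he : ‖e‖ = 1) :
    ∃ Q : Euc (n + 1) →L[ℝ] Euc n, IsSplitting e Q := by
  obtain ⟨b, hb⟩ := Orthonormal.exists_orthonormalBasis_extension_of_card_eq (𝕜 := ℝ)
    (E := Euc (n + 1)) (ι := Fin (n + 1)) (by simp) (v := fun _ => e) (s := {0}) (by
      refine ⟨fun i => he, fun i j hij => ?_⟩
      exact absurd (Subsingleton.elim i j) hij)
  have hb0 : b 0 = e := hb 0 rfl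
  let Q₀ : Euc (n + 1) →L[ℝ] Euc n :=
    ((EuclideanSpace.equiv (Fin n) ℝ).symm : (Fin n → ℝ) →L[ℝ] Euc n).comp
      (ContinuousLinearMap.pi fun i : Fin n => innerSL ℝ (b i.succ))
  have hQ (p : Euc (n + 1)) (i : Fin n) : Q₀ p i = ⟪b i.succ, p⟫ := rfl
  refine ⟨Q₀, fun p q => ?_, ?_⟩
  · rw [← b.sum_inner_mul_inner p q, Fin.sum_univ_succ, hb0, PiLp.inner_apply, add_comm]
    congr 1
    · refine Finset.sum_congr rfl fun i _ => ?_
      simp [hQ, real_inner_comm, mul_comm]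
    · rw [real_inner_comm q e]
  · have h1 := b.measurePreserving_repr
    have h2 := PiLp.volume_preserving_ofLp (Fin (n + 1))
    have h3 := volume_preserving_piFinSuccAbove (fun _ : Fin (n + 1) => ℝ) 0
    have h4 := Measure.measurePreserving_swap (μ := (volume : Measure ℝ))
      (ν := (volume : Measure (Fin n → ℝ)))
    have h5 := (PiLp.volume_preserving_toLp (Fin n)).prod (MeasurePreserving.id (volume : Measure ℝ))
    have := h5.comp (h4.comp (h3.comp (h2.comp h1)))
    convert this using 1
    ext p : 1
    refine Prod.ext ?_ ?_
    · ext i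
      simp [hQ, b.repr_apply_apply, Fin.tail]
    · simp [b.repr_apply_apply, hb0, real_inner_comm]

namespace IsSplitting

variable {n : ℕ} {e : Euc (n + 1)} {Q : Euc (n + 1) →L[ℝ] Euc n}

lemma norm_sq (hQ : IsSplitting e Q) (p : Euc (n + 1)) : ‖p‖ ^ 2 = ‖Q p‖ ^ 2 + ⟪p, e⟫ ^ 2 := by
  have := hQ.inner_eq p p
  rw [real_inner_self_eq_norm_sq, real_inner_self_eq_norm_sq] at this
  rw [this]; ring

lemma norm_le (hQ : IsSplitting e Q) (p : Euc (n + 1)) : ‖Q p‖ ≤ ‖p‖ := by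
  have := hQ.norm_sq p
  nlinarith [norm_nonneg p, norm_nonneg (Q p), sq_nonneg ⟪p, e⟫]

lemma norm_le_add (hQ : IsSplitting e Q) (p : Euc (n + 1)) : ‖p‖ ≤ ‖Q p‖ + |⟪p, e⟫| := by
  have := hQ.norm_sq p
  rw [← sq_abs ⟪p, e⟫] at this
  nlinarith [norm_nonneg p, norm_nonneg (Q p), abs_nonneg ⟪p, e⟫,
    mul_nonneg (norm_nonneg (Q p)) (abs_nonneg ⟪p, e⟫)]

lemma injective (hQ : IsSplitting e Q) : Function.Injective (fun p => (Q p, ⟪p, e⟫)) := by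
  intro p q h
  simp only [Prod.mk.injEq] at h
  have := hQ.norm_le_add (p - q)
  rw [map_sub, inner_sub_left, h.1, h.2, sub_self, sub_self, norm_zero, abs_zero, add_zero] at this
  exact sub_eq_zero.1 (norm_le_zero_iff.1 this)

lemma hausdorffMeasure_image_le (hQ : IsSplitting e Q) (C : Set (Euc (n + 1))) :
    μH[n] (Q '' C) ≤ μH[n] C := by
  have hL : LipschitzOnWith 1 Q C := by
    refine LipschitzOnWith.of_dist_le_mul fun x _ y _ => ?_
    rw [dist_eq_norm, dist_eq_norm, ← map_sub, NNReal.coe_one, one_mul]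
    exact hQ.norm_le _
  simpa using hL.hausdorffMeasure_image_le (d := n) (by positivity)

/-- A compact set with short fibers over `Q` has small volume. -/
lemma volume_le (hQ : IsSplitting e Q) {E : Set (Euc (n + 1))} (hE : IsCompact E) {l : ℝ}
    (h : ∀ p ∈ E, ∀ q ∈ E, Q p = Q q → ⟪p - q, e⟫ ≤ l) :
    volume E ≤ ENNReal.ofReal l * volume (Q '' E) := by
  set T : Euc (n + 1) → Euc n × ℝ := fun p => (Q p, ⟪p, e⟫)
  have hT : Continuous T := by fun_prop
  have hTE := (hE.image hT).measurableSet
  have hQE : MeasurableSet (Q '' E) := (hE.image Q.continuous).measurableSet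
  rw [← preimage_image_eq E hQ.injective,
    hQ.measurePreserving.measure_preimage hTE.nullMeasurableSet, preimage_image_eq E hQ.injective,
    Measure.prod_apply hTE, ← setLIntegral_const, ← lintegral_indicator hQE]
  refine lintegral_mono fun y => ?_
  by_cases hy : y ∈ Q '' E
  · rw [indicator_of_mem hy]
    refine (Real.volume_le_diam _).trans (Metric.ediam_le ?_)
    rintro z ⟨p, hp, hpz⟩ w ⟨q, hq, hqw⟩
    simp only [Prod.mk.injEq, T] at hpz hqw
    rw [edist_dist, Real.dist_eq, ← hpz.2, ← hqw.2]
    refine ENNReal.ofReal_le_ofReal (abs_le.2 ⟨?_, ?_⟩)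
    · have := h q hq p hp (hqw.1.trans hpz.1.symm)
      rw [inner_sub_left] at this
      linarith
    · have := h p hp q hq (hpz.1.trans hqw.1.symm)
      rwa [inner_sub_left] at this
  · rw [indicator_of_notMem hy]
    have : Prod.mk y ⁻¹' (T '' E) = ∅ := by
      ext z
      simp only [mem_preimage, mem_empty_iff_false, iff_false]
      rintro ⟨p, hp, hpz⟩
      simp only [Prod.mk.injEq, T] at hpz
      exact hy ⟨p, hp, hpz.1⟩
    simp [this]

/-- Volume of a cone over a flat base at height `h`. -/
lemma volume_cone (hQ : IsSplitting e Q) {B : Set (Euc n)} (hB : MeasurableSet B) {h : ℝ}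
    (hh : 0 < h) :
    volume {p | 0 < ⟪p, e⟫ ∧ ⟪p, e⟫ ≤ h ∧ (h / ⟪p, e⟫) • Q p ∈ B} =
      ENNReal.ofReal (h / (n + 1)) * volume B := by
  set S : Set (Euc n × ℝ) := {x | 0 < x.2 ∧ x.2 ≤ h ∧ (h / x.2) • x.1 ∈ B}
  have hS : MeasurableSet S := by
    have m1 : Measurable fun x : Euc n × ℝ => (h / x.2) • x.1 := by fun_prop
    exact (measurableSet_lt measurable_const measurable_snd).inter
      ((measurableSet_le measurable_snd measurable_const).inter (m1 hB))
  have e1 : {p | 0 < ⟪p, e⟫ ∧ ⟪p, e⟫ ≤ h ∧ (h / ⟪p, e⟫) • Q p ∈ B} =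
      (fun p => (Q p, ⟪p, e⟫)) ⁻¹' S := rfl
  rw [e1, hQ.measurePreserving.measure_preimage hS.nullMeasurableSet, Measure.prod_apply_symm hS]
  have e2 (z : ℝ) : volume ((fun x => (x, z)) ⁻¹' S) =
      (Ioc 0 h).indicator (fun z => ENNReal.ofReal ((z / h) ^ n) * volume B) z := by
    by_cases hz : z ∈ Ioc 0 h
    · rw [indicator_of_mem hz]
      have : (fun x => (x, z)) ⁻¹' S = (fun x => (h / z) • x) ⁻¹' B := by
        ext x
        simp [S, hz.1, hz.2]
      have hz0 := hz.1
      rw [this, Measure.addHaar_preimage_smul _ (by positivity)]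
      congr 2
      rw [finrank_euclideanSpace_fin, abs_of_nonneg (by positivity), ← inv_pow, inv_div]
    · rw [indicator_of_notMem hz]
      have : (fun x => (x, z)) ⁻¹' S = ∅ := by
        ext x
        simp only [S, mem_preimage, mem_ofPred_eq, mem_empty_iff_false, iff_false]
        exact fun hx => hz ⟨hx.1, hx.2.1⟩
      simp [this]
  simp_rw [e2]
  rw [lintegral_indicator measurableSet_Ioc, lintegral_mul_const _ (by fun_prop),
    ← ofReal_integral_eq_lintegral_ofReal]
  · congr 2
    rw [← intervalIntegral.integral_of_le hh.le]
    simp_rw [div_pow]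
    rw [intervalIntegral.integral_div, integral_pow]
    field_simp
    simp [pow_succ]
  · exact (Continuous.integrableOn_Icc (by fun_prop)).mono_set Ioc_subset_Icc_self
  · refine (ae_restrict_mem measurableSet_Ioc).mono fun z hz => ?_
    have := hz.1
    exact pow_nonneg (by positivity) _

end IsSplitting

/-- Hausdorff measure in top dimension is a positive finite multiple of Lebesgue measure. -/
lemma exists_hausdorffMeasure_eq_smul (n : ℕ) :
    ∃ c : ℝ≥0∞, c ≠ 0 ∧ c ≠ ∞ ∧ (μH[n] : Measure (Euc n)) = c • volume := by
  have h : (μH[n] : Measure (Euc n)).IsAddHaarMeasure := by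
    have := isAddHaarMeasure_hausdorffMeasure (E := Euc n)
    rwa [finrank_euclideanSpace_fin] at this
  refine ⟨(μH[n] : Measure (Euc n)).addHaarScalarFactor volume, ?_, by simp,
    Measure.isAddLeftInvariant_eq_smul _ _⟩
  simpa using (Measure.addHaarScalarFactor_pos_of_isAddHaarMeasure _ _).ne'

/-- A map bounded below by `κ * dist` does not shrink Hausdorff measure too much. -/
lemma hausdorffMeasure_le_of_mul_dist_le {X Y : Type*} [MetricSpace X] [MeasurableSpace X]
    [BorelSpace X] [MetricSpace Y] [MeasurableSpace Y] [BorelSpace Y] (n : ℕ)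
    {f : X → Y} {s : Set X} {κ : ℝ} (hκ : 0 < κ)
    (h : ∀ x ∈ s, ∀ y ∈ s, κ * dist x y ≤ dist (f x) (f y)) :
    InjOn f s ∧ ENNReal.ofReal (κ ^ n) * μH[n] s ≤ μH[n] (f '' s) := by
  have hinj : InjOn f s := by
    intro x hx y hy hxy
    have := h x hx y hy
    rw [hxy, dist_self] at this
    exact dist_le_zero.1 (nonpos_of_mul_nonpos_right this hκ)
  refine ⟨hinj, ?_⟩
  rcases s.eq_empty_or_nonempty with rfl | ⟨x₀, hx₀⟩
  · simp
  have : Nonempty X := ⟨x₀⟩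
  have hinv (x) (hx : x ∈ s) : Function.invFunOn f s (f x) = x := hinj.leftInvOn_invFunOn hx
  have hL : LipschitzOnWith (Real.toNNReal κ⁻¹) (Function.invFunOn f s) (f '' s) := by
    refine LipschitzOnWith.of_dist_le_mul ?_
    rintro _ ⟨x, hx, rfl⟩ _ ⟨y, hy, rfl⟩
    rw [hinv x hx, hinv y hy, Real.coe_toNNReal _ (by positivity), ← div_eq_inv_mul,
      le_div_iff₀' hκ]
    exact h x hx y hy
  have := hL.hausdorffMeasure_image_le (d := n) (by positivity)
  have e : Function.invFunOn f s '' (f '' s) = s := hinj.leftInvOn_invFunOn.image_image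
  rw [e, ENNReal.rpow_natCast] at this
  calc ENNReal.ofReal (κ ^ n) * μH[n] s
      ≤ ENNReal.ofReal (κ ^ n) * ((Real.toNNReal κ⁻¹ : ℝ≥0∞) ^ n * μH[n] (f '' s)) := by gcongr
    _ = μH[n] (f '' s) := by
        rw [← mul_assoc, ENNReal.ofReal_pow hκ.le, ← mul_pow]
        change (ENNReal.ofReal κ * ENNReal.ofReal κ⁻¹) ^ n * _ = _
        rw [← ENNReal.ofReal_mul hκ.le, mul_inv_cancel₀ hκ.ne']
        simp

/-- The points of `P` that some hyperplane with normal in `U` weakly separates from `K`. For `P = K`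
these are the points of `K` with an outward normal in `U`. -/
def outerSet {m : ℕ} (K U P : Set (Euc m)) : Set (Euc m) :=
  {p ∈ P | ∃ n ∈ U, ∀ y ∈ K, ⟪y - p, n⟫ ≤ 0}

section OuterSet

variable {m : ℕ} {K U V P : Set (Euc m)}

lemma isCompact_outerSet (hU : IsCompact U) (hP : IsCompact P) : IsCompact (outerSet K U P) := by
  have hc : IsClosed {q : Euc m × Euc m | ∀ y ∈ K, ⟪y - q.1, q.2⟫ ≤ 0} := by
    have : {q : Euc m × Euc m | ∀ y ∈ K, ⟪y - q.1, q.2⟫ ≤ 0} =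
        ⋂ y ∈ K, {q : Euc m × Euc m | ⟪y - q.1, q.2⟫ ≤ 0} := by
      ext q; simp
    rw [this]
    exact isClosed_biInter fun y _ => isClosed_le (by fun_prop) continuous_const
  have := ((hP.prod hU).inter_right hc).image continuous_fst
  convert this using 1
  ext p
  constructor
  · rintro ⟨hp, n, hn, h⟩
    exact ⟨(p, n), ⟨⟨hp, hn⟩, h⟩, rfl⟩
  · rintro ⟨⟨p, n⟩, ⟨⟨hp, hn⟩, h⟩, rfl⟩
    exact ⟨hp, n, hn, h⟩

lemma outerSet_mono_left (hUV : U ⊆ V) : outerSet K U P ⊆ outerSet K V P :=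
  fun _ ⟨hp, n, hn, h⟩ => ⟨hp, n, hUV hn, h⟩

lemma outerSet_self_subset_frontier (hU : U ⊆ unitSphere m) : outerSet K U K ⊆ frontier K := by
  rintro p ⟨hp, n, hn, h⟩
  refine ⟨subset_closure hp, fun hi => ?_⟩
  have hn1 : ‖n‖ = 1 := by simpa [unitSphere] using hU hn
  have hcont : Filter.Tendsto (fun t : ℝ => p + t • n) (𝓝[>] 0) (𝓝 p) := by
    refine tendsto_nhdsWithin_of_tendsto_nhds ?_
    have : Continuous fun t : ℝ => p + t • n := by fun_prop
    simpa using this.tendsto 0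
  obtain ⟨t, ht, ht0⟩ := ((hcont.eventually (mem_interior_iff_mem_nhds.1 hi)).and
    self_mem_nhdsWithin).exists
  have := h _ ht
  rw [add_sub_cancel_left, real_inner_smul_left, real_inner_self_eq_norm_sq, hn1] at this
  have ht0' : 0 < t := ht0
  linarith

lemma exists_normal (hK : Convex ℝ K) (hi : (interior K).Nonempty) {p : Euc m}
    (hp : p ∉ interior K) : ∃ n, ‖n‖ = 1 ∧ ∀ y ∈ K, ⟪y - p, n⟫ ≤ 0 := by
  obtain ⟨f, hf⟩ := geometric_hahn_banach_open_point hK.interior isOpen_interior hp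
  obtain ⟨v, rfl⟩ := (InnerProductSpace.toDual ℝ (Euc m)).surjective f
  simp only [InnerProductSpace.toDual_apply_apply] at hf
  obtain ⟨q, hq⟩ := hi
  have hv : 0 < ‖v‖ := by
    rw [norm_pos_iff]
    rintro rfl
    simpa using hf q hq
  refine ⟨‖v‖⁻¹ • v, by rw [norm_smul, norm_inv, norm_norm, inv_mul_cancel₀ hv.ne'], fun y hy => ?_⟩
  have h1 : y ∈ closure (interior K) := by
    rw [hK.closure_interior_eq_closure_of_nonempty_interior ⟨q, hq⟩]
    exact subset_closure hy
  have h2 : closure (interior K) ⊆ {y | ⟪v, y⟫ ≤ ⟪v, p⟫} :=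
    closure_minimal (fun a ha => (hf a ha).le) (isClosed_le (by fun_prop) continuous_const)
  have h3 : ⟪v, y⟫ ≤ ⟪v, p⟫ := h2 h1
  rw [real_inner_smul_right, inner_sub_left, real_inner_comm v y, real_inner_comm v p]
  exact mul_nonpos_of_nonneg_of_nonpos (by positivity) (by linarith)

lemma inner_le_mul_norm_of_mem {e x y : Euc m} {ε : ℝ} (hU : U ⊆ Metric.closedBall e ε)
    (hx : x ∈ K) (hy : y ∈ outerSet K U K) : ⟪x - y, e⟫ ≤ ε * ‖x - y‖ := by
  obtain ⟨_, n, hn, h⟩ := hy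
  have h1 := h x hx
  have h2 : ‖e - n‖ ≤ ε := by
    have := hU hn
    rwa [Metric.mem_closedBall, dist_comm, dist_eq_norm] at this
  have h3 := real_inner_le_norm (x - y) (e - n)
  rw [inner_sub_right] at h3
  nlinarith [norm_nonneg (x - y)]

/-- The part of the boundary with normals close to `e` is a Lipschitz graph over `eᗮ`. -/
lemma abs_inner_le_mul_norm_of_mem {e x y : Euc m} {ε : ℝ} (hU : U ⊆ Metric.closedBall e ε)
    (hx : x ∈ outerSet K U K) (hy : y ∈ outerSet K U K) : |⟪x - y, e⟫| ≤ ε * ‖x - y‖ := by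
  refine abs_le.2 ⟨?_, inner_le_mul_norm_of_mem hU hx.1 hy⟩
  have := inner_le_mul_norm_of_mem hU hy.1 hx
  rw [← neg_sub x y, inner_neg_left, norm_neg] at this
  linarith

end OuterSet

lemma hausdorffMeasure_outerSet_inter_eq_zero {n : ℕ} {K : Set (Euc (n + 2))} (hK : IsCompact K)
    {e₁ e₂ : Euc (n + 2)} (h₁ : ‖e₁‖ = 1) (h₂ : ‖e₂‖ = 1) {ε : ℝ} (hε : 0 ≤ ε) (hε' : ε ≤ 1 / 2)
    (h : 16 * ε ^ 2 < 1 - ⟪e₁, e₂⟫ ^ 2) :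
    μH[(n + 1 : ℕ)] (outerSet K (Metric.closedBall e₁ ε) K ∩
      outerSet K (Metric.closedBall e₂ ε) K) = 0 := by
  obtain ⟨Q, hQ⟩ := exists_isSplitting e₁ h₁
  set S := outerSet K (Metric.closedBall e₁ ε) K ∩ outerSet K (Metric.closedBall e₂ ε) K
  have hS : IsCompact S := (isCompact_outerSet (isCompact_closedBall _ _) hK).inter
    (isCompact_outerSet (isCompact_closedBall _ _) hK)
  have hgraph (x) (hx : x ∈ S) (y) (hy : y ∈ S) : (1 - ε) * dist x y ≤ dist (Q x) (Q y) := by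
    have a1 := abs_inner_le_mul_norm_of_mem subset_rfl hx.1 hy.1
    have a2 := hQ.norm_le_add (x - y)
    rw [dist_eq_norm, dist_eq_norm, ← map_sub]
    linarith
  have hv : 4 * ε < ‖Q e₂‖ := by
    have := hQ.norm_sq e₂
    rw [h₂, real_inner_comm] at this
    exact lt_of_pow_lt_pow_left₀ 2 (norm_nonneg _) (by nlinarith)
  have hv0 : 0 < ‖Q e₂‖ := by linarith
  obtain ⟨R, hR⟩ := exists_isSplitting (‖Q e₂‖⁻¹ • Q e₂)
    (by rw [norm_smul, norm_inv, norm_norm, inv_mul_cancel₀ hv0.ne'])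
  have hQS : volume (Q '' S) = 0 := by
    refine le_antisymm ((hR.volume_le (l := 0) (hS.image Q.continuous) ?_).trans (by simp)) bot_le
    rintro _ ⟨x, hx, rfl⟩ _ ⟨y, hy, rfl⟩ hxy
    rw [← map_sub]
    set d := x - y
    have b0 : R (Q d) = 0 := by rw [map_sub, map_sub, hxy, sub_self]
    have b1 := abs_inner_le_mul_norm_of_mem subset_rfl hx.1 hy.1
    have b2 := abs_inner_le_mul_norm_of_mem subset_rfl hx.2 hy.2
    have b3 := hQ.norm_le_add d
    have b4 := hR.norm_le_add (Q d)
    rw [b0, norm_zero, zero_add] at b4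
    have b5 := hQ.inner_eq d e₂
    have b6 : ⟪Q d, ‖Q e₂‖⁻¹ • Q e₂⟫ * ‖Q e₂‖ = ⟪Q d, Q e₂⟫ := by
      rw [real_inner_smul_right]; field_simp
    set s := ⟪Q d, ‖Q e₂‖⁻¹ • Q e₂⟫
    have b7 : |⟪e₂, e₁⟫| ≤ 1 := by
      simpa [h₁, h₂] using abs_real_inner_le_norm e₂ e₁
    have b8 : |s| * ‖Q e₂‖ ≤ 2 * ε * ‖d‖ := by
      have : s * ‖Q e₂‖ = ⟪d, e₂⟫ - ⟪d, e₁⟫ * ⟪e₂, e₁⟫ := by rw [b6, b5]; ring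
      rw [← abs_of_pos hv0, ← abs_mul, this]
      calc _ ≤ |⟪d, e₂⟫| + |⟪d, e₁⟫ * ⟪e₂, e₁⟫| := abs_sub _ _
        _ ≤ ε * ‖d‖ + ε * ‖d‖ := by
          rw [abs_mul]
          refine add_le_add b2 (le_trans ?_ b1)
          exact mul_le_of_le_one_right (abs_nonneg _) b7
        _ = _ := by ring
    have b9 : ‖d‖ ≤ 2 * |s| := by nlinarith [norm_nonneg d]
    have : |s| * ‖Q e₂‖ ≤ |s| * (4 * ε) := by nlinarith
    have hs : |s| ≤ 0 := by
      by_contra! hs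
      exact absurd (le_of_mul_le_mul_left this hs) (not_le.2 hv)
    exact (le_abs_self s).trans hs
  obtain ⟨c, -, -, hc⟩ := exists_hausdorffMeasure_eq_smul (n + 1)
  have key := (hausdorffMeasure_le_of_mul_dist_le (n + 1) (by linarith : 0 < 1 - ε) hgraph).2
  rw [hc, Measure.smul_apply, hQS, smul_zero, nonpos_iff_eq_zero, mul_eq_zero] at key
  refine key.resolve_left ?_
  rw [ENNReal.ofReal_eq_zero, not_le]
  exact pow_pos (by linarith) _

/-- The boundary points with more than one outward unit normal. -/
def singularSet {m : ℕ} (K : Set (Euc m)) : Set (Euc m) :=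
  {x | ∃ n₁ n₂, n₁ ≠ n₂ ∧ IsOutwardNormalAt K x n₁ ∧ IsOutwardNormalAt K x n₂}

lemma IsConvexBody.inner_sq_lt_one {m : ℕ} {K : Set (Euc m)} (hK : IsConvexBody K) {x n₁ n₂ : Euc m}
    (hne : n₁ ≠ n₂) (h₁ : IsOutwardNormalAt K x n₁) (h₂ : IsOutwardNormalAt K x n₂) :
    ⟪n₁, n₂⟫ ^ 2 < 1 := by
  have h3 := h₁.2.1
  have h4 := h₂.2.1
  rw [sq_lt_one_iff_abs_lt_one, abs_lt]
  constructor
  · have := neg_le_of_abs_le (abs_real_inner_le_norm n₁ n₂)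
    rw [h3, h4, one_mul] at this
    refine lt_of_le_of_ne this fun heq => ?_
    have hneg : n₂ = -n₁ := by
      have : ⟪n₁, -n₂⟫ = 1 := by rw [inner_neg_right, ← heq, neg_neg]
      rw [inner_eq_one_iff_of_norm_eq_one h3 (by rwa [norm_neg])] at this
      rw [this, neg_neg]
    obtain ⟨q, hq⟩ := hK.2.2
    have hq' : q ∈ outerSet K {n₁} K := by
      refine ⟨interior_subset hq, n₁, rfl, fun y hy => ?_⟩
      have a1 := h₁.2.2 y hy
      have a2 := h₂.2.2 q (interior_subset hq)
      rw [hneg, inner_neg_right] at a2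
      have : y - q = (y - x) - (q - x) := by abel
      rw [this, inner_sub_left]
      linarith
    exact (outerSet_self_subset_frontier (by simpa [unitSphere] using h3) hq').2 hq
  · have := (real_inner_le_norm n₁ n₂)
    rw [h3, h4, one_mul] at this
    exact lt_of_le_of_ne this fun heq =>
      hne ((inner_eq_one_iff_of_norm_eq_one h3 h4).1 heq)

lemma IsConvexBody.mem_of_mem_frontier {m : ℕ} {K : Set (Euc m)} (hK : IsConvexBody K) {x : Euc m}
    (hx : x ∈ frontier K) : x ∈ K := by
  rw [← hK.2.1.isClosed.closure_eq]
  exact hx.1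

lemma hausdorffMeasure_singularSet {n : ℕ} {K : Set (Euc (n + 2))} (hK : IsConvexBody K) :
    μH[(n + 1 : ℕ)] (singularSet K) = 0 := by
  obtain ⟨D, hDc, hD⟩ := TopologicalSpace.exists_countable_dense (unitSphere (n + 2))
  have := hDc.to_subtype
  let I := {i : D × D × ℕ // 16 * (1 / ((i.2.2 : ℝ) + 2)) ^ 2 <
    1 - ⟪((i.1 : unitSphere (n + 2)) : Euc (n + 2)), ((i.2.1 : unitSphere (n + 2)) : Euc (n + 2))⟫ ^ 2}
  let F : I → Set (Euc (n + 2)) := fun i =>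
    outerSet K (Metric.closedBall ((i.1.1 : unitSphere (n + 2)) : Euc (n + 2)) (1 / ((i.1.2.2 : ℝ) + 2))) K ∩
    outerSet K (Metric.closedBall ((i.1.2.1 : unitSphere (n + 2)) : Euc (n + 2)) (1 / ((i.1.2.2 : ℝ) + 2))) K
  have hnorm (u : unitSphere (n + 2)) : ‖(u : Euc (n + 2))‖ = 1 := by
    simpa [unitSphere] using u.2
  refine measure_mono_null (t := ⋃ i, F i) ?_ (measure_iUnion_null fun i => ?_)
  · rintro x ⟨n₁, n₂, hne, h₁, h₂⟩
    have hlt := hK.inner_sq_lt_one hne h₁ h₂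
    have hcont : Continuous fun p : unitSphere (n + 2) × unitSphere (n + 2) × ℝ =>
        16 * (p.2.2) ^ 2 - (1 - ⟪(p.1 : Euc (n + 2)), (p.2.1 : Euc (n + 2))⟫ ^ 2) := by fun_prop
    let u₁ : unitSphere (n + 2) := ⟨n₁, by simpa [unitSphere] using h₁.2.1⟩
    let u₂ : unitSphere (n + 2) := ⟨n₂, by simpa [unitSphere] using h₂.2.1⟩
    have hopen := (isOpen_Iio (a := (0 : ℝ))).preimage hcont
    have hmem : (u₁, u₂, (0 : ℝ)) ∈ (fun p : unitSphere (n + 2) × unitSphere (n + 2) × ℝ =>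
        16 * (p.2.2) ^ 2 - (1 - ⟪(p.1 : Euc (n + 2)), (p.2.1 : Euc (n + 2))⟫ ^ 2)) ⁻¹' Iio 0 := by
      simp only [mem_preimage, mem_Iio, u₁, u₂]
      linarith
    obtain ⟨δ, hδ, hball⟩ := Metric.isOpen_iff.1 hopen _ hmem
    obtain ⟨k, hk⟩ := exists_nat_one_div_lt hδ
    have hk' : 1 / ((k : ℝ) + 2) < δ := lt_of_le_of_lt (by gcongr; norm_num) hk
    have hk0 : 0 < 1 / ((k : ℝ) + 2) := by positivity
    obtain ⟨d₁, hd₁, hd₁'⟩ := hD.exists_dist_lt u₁ hk0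
    obtain ⟨d₂, hd₂, hd₂'⟩ := hD.exists_dist_lt u₂ hk0
    have hin : (d₁, d₂, 1 / ((k : ℝ) + 2)) ∈ Metric.ball (u₁, u₂, (0 : ℝ)) δ := by
      rw [Metric.mem_ball, Prod.dist_eq, Prod.dist_eq, max_lt_iff, max_lt_iff]
      refine ⟨by rw [dist_comm]; linarith, by rw [dist_comm]; linarith, ?_⟩
      rw [Real.dist_eq, sub_zero, abs_of_pos hk0]
      exact hk'
    have hin' := hball hin
    simp only [mem_preimage, mem_Iio, sub_neg] at hin'
    refine mem_iUnion.2 ⟨⟨(⟨d₁, hd₁⟩, ⟨d₂, hd₂⟩, k), hin'⟩, ?_, ?_⟩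
    · exact ⟨hK.mem_of_mem_frontier h₁.1, n₁, hd₁'.le, h₁.2.2⟩
    · exact ⟨hK.mem_of_mem_frontier h₂.1, n₂, hd₂'.le, h₂.2.2⟩
  · exact hausdorffMeasure_outerSet_inter_eq_zero hK.2.1 (hnorm _) (hnorm _) (by positivity)
      (by gcongr; simp) i.2

lemma gaussMap_spec {m : ℕ} {K : Set (Euc m)} (hK : IsConvexBody K) {x : Euc m}
    (hx : x ∈ frontier K) : IsOutwardNormalAt K x (gaussMap K x) := by
  have h : ∃ n, IsOutwardNormalAt K x n := by
    obtain ⟨n, hn, h⟩ := exists_normal hK.1 hK.2.2 hx.2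
    exact ⟨n, hx, hn, h⟩
  rw [gaussMap, dif_pos h]
  exact h.choose_spec

lemma gaussMap_mem_iff {m : ℕ} {K U : Set (Euc m)} (hK : IsConvexBody K) {x : Euc m}
    (hx : x ∈ frontier K) (hs : x ∉ singularSet K) :
    gaussMap K x ∈ U ↔ x ∈ outerSet K (U ∩ unitSphere m) K := by
  have hg := gaussMap_spec hK hx
  constructor
  · intro h
    exact ⟨hK.mem_of_mem_frontier hx, _, ⟨h, by simpa [unitSphere] using hg.2.1⟩, hg.2.2⟩
  · rintro ⟨_, n, ⟨hnU, hn⟩, h⟩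
    have : gaussMap K x = n := by
      by_contra hne
      exact hs ⟨_, _, hne, hg, hx, by simpa [unitSphere] using hn, h⟩
    rwa [this]

lemma isCompact_unitSphere (m : ℕ) : IsCompact (unitSphere m) := isCompact_sphere _ _

lemma aemeasurable_gaussMap {n : ℕ} {K : Set (Euc (n + 2))} (hK : IsConvexBody K) :
    AEMeasurable (gaussMap K) (μH[(n + 1 : ℕ)].restrict (frontier K)) := by
  classical
  set N := toMeasurable μH[(n + 1 : ℕ)] (singularSet K)
  have hN : μH[(n + 1 : ℕ)] N = 0 := by
    rw [measure_toMeasurable, hausdorffMeasure_singularSet hK]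
  have hNm : MeasurableSet N := measurableSet_toMeasurable _ _
  have hfm : MeasurableSet (frontier K) := isClosed_frontier.measurableSet
  set G := frontier K \ N
  refine ⟨G.piecewise (gaussMap K) (fun _ => 0), ?_, ?_⟩
  · refine measurable_of_isClosed fun F hF => ?_
    rw [piecewise_preimage]
    have : G.ite (gaussMap K ⁻¹' F) ((fun _ => 0) ⁻¹' F) =
        G.ite (outerSet K (F ∩ unitSphere (n + 2)) K) ((fun _ => 0) ⁻¹' F) := by
      ext x
      by_cases hx : x ∈ G
      · simp only [Set.ite, mem_union, mem_inter_iff, mem_preimage, mem_sdiff, hx, and_true,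
          not_true_eq_false, and_false, or_false]
        exact gaussMap_mem_iff hK hx.1 fun h => hx.2 (subset_toMeasurable _ _ h)
      · simp [Set.ite, hx]
    rw [this]
    exact (hfm.diff hNm).ite
      (isCompact_outerSet ((isCompact_unitSphere _).inter_left hF) hK.2.1).measurableSet
      (measurable_const hF.measurableSet)
  · have h1 : ∀ᵐ x ∂(μH[(n + 1 : ℕ)].restrict (frontier K)), x ∉ N :=
      ae_restrict_of_ae (measure_eq_zero_iff_ae_notMem.1 hN)
    filter_upwards [h1, ae_restrict_mem hfm] with x hx hx'
    exact (piecewise_eq_of_mem _ _ _ (show x ∈ G from ⟨hx', hx⟩)).symm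

lemma surfMeasure_eq {n : ℕ} {K U : Set (Euc (n + 2))} (hK : IsConvexBody K) (hU : IsClosed U)
    (hUs : U ⊆ unitSphere (n + 2)) : surfMeasure K U = μH[(n + 1 : ℕ)] (outerSet K U K) := by
  have hd : ((n + 2 : ℕ) : ℝ) - 1 = (n + 1 : ℕ) := by push_cast; ring
  have hc : IsCompact (outerSet K U K) :=
    isCompact_outerSet ((isCompact_unitSphere _).of_isClosed_subset hU hUs) hK.2.1
  have hsub := outerSet_self_subset_frontier (K := K) hUs
  rw [surfMeasure, hd, Measure.map_apply_of_aemeasurable (aemeasurable_gaussMap hK) hU.measurableSet]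
  calc _ = (μH[(n + 1 : ℕ)].restrict (frontier K)) (outerSet K U K) := by
        refine measure_congr ?_
        have h1 : ∀ᵐ x ∂(μH[(n + 1 : ℕ)].restrict (frontier K)), x ∉ singularSet K :=
          ae_restrict_of_ae (measure_eq_zero_iff_ae_notMem.1 (hausdorffMeasure_singularSet hK))
        filter_upwards [h1, ae_restrict_mem isClosed_frontier.measurableSet] with x hx hx'
        have := gaussMap_mem_iff (U := U) hK hx' hx
        rw [inter_eq_left.2 hUs] at this
        exact propext this
    _ = _ := by rw [Measure.restrict_apply hc.measurableSet, inter_eq_left.2 hsub]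

/-- The truncated cone with apex `0` over `B`, apex removed. -/
def coneOver {m : ℕ} (B : Set (Euc m)) : Set (Euc m) :=
  {p | ∃ s : ℝ, 0 < s ∧ s ≤ 1 ∧ ∃ x ∈ B, p = s • x}

lemma coneOver_subset {m : ℕ} {L B : Set (Euc m)} (hL : Convex ℝ L) (h0 : 0 ∈ L) (hB : B ⊆ L) :
    coneOver B ⊆ L := by
  rintro _ ⟨s, hs0, hs1, x, hx, rfl⟩
  exact hL.smul_mem_of_zero_mem h0 (hB hx) ⟨hs0.le, hs1⟩

lemma inner_pos_of_normal {m : ℕ} {L : Set (Euc m)} {ρ : ℝ} (hρ : 0 < ρ)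
    (hρL : Metric.closedBall 0 ρ ⊆ L) {x u : Euc m} (hu : ‖u‖ = 1)
    (h : ∀ y ∈ L, ⟪y - x, u⟫ ≤ 0) : 0 < ⟪x, u⟫ := by
  have := h (ρ • u) (hρL (by simp [norm_smul, hu, abs_of_pos hρ]))
  rw [inner_sub_left, real_inner_smul_left, real_inner_self_eq_norm_sq, hu] at this
  linarith

lemma disjoint_coneOver {m : ℕ} {L B B' : Set (Euc m)} {ρ : ℝ} (hρ : 0 < ρ)
    (hρL : Metric.closedBall 0 ρ ⊆ L) (hB : B ⊆ outerSet L (unitSphere m) L)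
    (hB' : B' ⊆ outerSet L (unitSphere m) L) (h : Disjoint B B') :
    Disjoint (coneOver B) (coneOver B') := by
  have key {x x' : Euc m} {s s' : ℝ} (hs' : 0 < s') (hx : x ∈ outerSet L (unitSphere m) L)
      (hx' : x' ∈ L) (he : s • x = s' • x') : s ≤ s' := by
    obtain ⟨_, u, hu, hux⟩ := hx
    have hu1 : ‖u‖ = 1 := by simpa [unitSphere] using hu
    have h1 := inner_pos_of_normal hρ hρL hu1 hux
    have h2 := hux x' hx'
    have h3 := congrArg (fun z => ⟪z, u⟫) he
    simp only [real_inner_smul_left] at h3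
    rw [inner_sub_left] at h2
    by_contra! hlt
    nlinarith
  rw [Set.disjoint_left] at h ⊢
  rintro _ ⟨s, hs, -, x, hx, rfl⟩ ⟨s', hs', -, x', hx', he⟩
  have : s = s' := le_antisymm (key hs' (hB hx) (hB' hx').1 he)
    (key hs (hB' hx') (hB hx).1 he.symm)
  subst this
  have hxx := smul_right_injective (Euc m) hs.ne' he
  exact h hx (hxx ▸ hx')

/-- The support function of `L`. -/
def supportFn {m : ℕ} (L : Set (Euc m)) (e : Euc m) : ℝ := sSup ((fun y => ⟪y, e⟫) '' L)

lemma isGreatest_supportFn {m : ℕ} {L : Set (Euc m)} (hL : IsCompact L) (h0 : L.Nonempty)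
    (e : Euc m) : IsGreatest ((fun y => ⟪y, e⟫) '' L) (supportFn L e) :=
  (hL.image (by fun_prop)).isGreatest_sSup (h0.image _)

section Estimates

variable {n : ℕ} {L U B : Set (Euc (n + 1))} {ρ R η : ℝ}

lemma le_supportFn (hL : IsCompact L) (hρ : 0 < ρ) (hρL : Metric.closedBall 0 ρ ⊆ L)
    {e : Euc (n + 1)} (he : ‖e‖ = 1) : ρ ≤ supportFn L e := by
  have h0 : L.Nonempty := ⟨0, hρL (by simp [hρ.le])⟩
  have := (isGreatest_supportFn hL h0 e).2 ⟨ρ • e, hρL (by simp [norm_smul, he, abs_of_pos hρ]), rfl⟩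
  simpa [real_inner_smul_left, he] using this

lemma inner_le_of_norm_sub_le {x u v : Euc (n + 1)} {r ε : ℝ} (hx : ‖x‖ ≤ r) (huv : ‖u - v‖ ≤ ε) :
    ⟪x, u⟫ ≤ ⟪x, v⟫ + r * ε := by
  have h1 := real_inner_le_norm x (u - v)
  rw [inner_sub_right] at h1
  have : ‖x‖ * ‖u - v‖ ≤ r * ε :=
    mul_le_mul hx huv (norm_nonneg _) ((norm_nonneg _).trans hx)
  linarith

/-- Lower bound for the volume of the cone over a nearly flat piece of the boundary. -/
lemma exists_subset_coneOver (hL : IsCompact L) (hρ : 0 < ρ) (hρL : Metric.closedBall 0 ρ ⊆ L)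
    (hR : ρ ≤ R) (hRL : L ⊆ Metric.closedBall 0 R) (hη : 0 < η) (hη' : η < 1 / 2)
    {e : Euc (n + 1)} (he : ‖e‖ = 1) (hU : U ⊆ Metric.closedBall e (η * ρ / (4 * R)))
    (hB : MeasurableSet B) (hBU : B ⊆ outerSet L U L) {c : ℝ≥0∞}
    (hc : (μH[n] : Measure (Euc n)) = c • volume) :
    ∃ T ⊆ coneOver B, MeasurableSet T ∧
      ENNReal.ofReal (supportFn L e * (1 - 2 * η) ^ (n + 1)) * μH[n] B ≤
        c * (ENNReal.ofReal (n + 1) * volume T) := by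
  obtain ⟨Q, hQ⟩ := exists_isSplitting e he
  have h0 : L.Nonempty := ⟨0, hρL (by simp [hρ.le])⟩
  have hH := isGreatest_supportFn hL h0 e
  have hHρ := le_supportFn hL hρ hρL he
  set H := supportFn L e
  set ε := η * ρ / (4 * R)
  have hR0 : 0 < R := by linarith
  have hRε : R * ε = η * ρ / 4 := by simp only [ε]; field_simp
  have hε : 0 < ε := by positivity
  have hεη : ε ≤ η / 4 := by
    have : R * ε ≤ R * (η / 4) := by rw [hRε]; nlinarith
    exact le_of_mul_le_mul_left this hR0
  set h := H - 2 * (R * ε)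
  have hH0 : 0 < H := by linarith
  have hhH : H * (1 - η / 2) ≤ h := by
    simp only [h, hRε]; nlinarith
  have hh0 : 0 < h := by nlinarith
  have hnorm {x : Euc (n + 1)} (hx : x ∈ L) : ‖x‖ ≤ R := by simpa using hRL hx
  have hheight {x : Euc (n + 1)} (hx : x ∈ B) : h ≤ ⟪x, e⟫ ∧ ⟪x, e⟫ ≤ H := by
    refine ⟨?_, hH.2 ⟨x, (hBU hx).1, rfl⟩⟩
    obtain ⟨hxL, u, hu, hux⟩ := hBU hx
    obtain ⟨z, hz, hzH⟩ := hH.1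
    have d1 : ‖u - e‖ ≤ ε := by simpa [dist_eq_norm] using hU hu
    have d2 : ‖e - u‖ ≤ ε := by rwa [norm_sub_rev]
    have a1 := inner_le_of_norm_sub_le (hnorm hxL) d1
    have a2 := inner_le_of_norm_sub_le (hnorm hz) d2
    have a3 := hux z hz
    rw [inner_sub_left] at a3
    simp only at hzH
    simp only [h]
    linarith
  set ψ : Euc (n + 1) → Euc n := fun x => (h / ⟪x, e⟫) • Q x
  have hψ (x) (hx : x ∈ B) (y) (hy : y ∈ B) : (1 - 2 * η) * dist x y ≤ dist (ψ x) (ψ y) := by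
    obtain ⟨x1, x2⟩ := hheight hx
    obtain ⟨y1, y2⟩ := hheight hy
    have hx0 : 0 < ⟪x, e⟫ := hh0.trans_le x1
    have hy0 : 0 < ⟪y, e⟫ := hh0.trans_le y1
    have g1 := abs_inner_le_mul_norm_of_mem hU (hBU hx) (hBU hy)
    have g2 := hQ.norm_le_add (x - y)
    have g3 : ‖Q y‖ ≤ R := (hQ.norm_le y).trans (hnorm (hBU hy).1)
    have e1 : ψ x - ψ y = (h / ⟪x, e⟫) • Q (x - y) + (h / ⟪x, e⟫ - h / ⟪y, e⟫) • Q y := by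
      simp only [ψ, map_sub, smul_sub, sub_smul]; abel
    have e2 : |h / ⟪x, e⟫ - h / ⟪y, e⟫| * ‖Q y‖ ≤ η / 2 * ‖x - y‖ := by
      have : h / ⟪x, e⟫ - h / ⟪y, e⟫ = -(h / ⟪x, e⟫ * (⟪x - y, e⟫ / ⟪y, e⟫)) := by
        rw [inner_sub_left]; field_simp; ring
      rw [this, abs_neg, abs_mul, abs_div, abs_div, abs_of_pos hh0, abs_of_pos hx0, abs_of_pos hy0]
      calc h / ⟪x, e⟫ * (|⟪x - y, e⟫| / ⟪y, e⟫) * ‖Q y‖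
          ≤ 1 * (ε * ‖x - y‖ / h) * R := by
            gcongr
            exact (div_le_one hx0).2 x1
        _ = (R * ε) / h * ‖x - y‖ := by ring
        _ ≤ η / 2 * ‖x - y‖ := by
            refine mul_le_mul_of_nonneg_right ?_ (norm_nonneg _)
            rw [hRε, div_le_iff₀ hh0]
            nlinarith
    have e3 : (1 - η / 2) ≤ h / ⟪x, e⟫ := by
      rw [le_div_iff₀ hx0]
      nlinarith
    have e4 : (1 - η / 4) * ‖x - y‖ ≤ ‖Q (x - y)‖ := by
      nlinarith [norm_nonneg (x - y)]
    have e5 : (1 - η / 2) * ((1 - η / 4) * ‖x - y‖) ≤ h / ⟪x, e⟫ * ‖Q (x - y)‖ :=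
      mul_le_mul e3 e4 (mul_nonneg (by linarith) (norm_nonneg _)) (by positivity)
    rw [dist_eq_norm, dist_eq_norm, e1]
    have e6 := norm_sub_le_norm_add ((h / ⟪x, e⟫) • Q (x - y)) ((h / ⟪x, e⟫ - h / ⟪y, e⟫) • Q y)
    rw [norm_smul, norm_smul, Real.norm_eq_abs, Real.norm_eq_abs, abs_of_pos (by positivity)] at e6
    nlinarith [norm_nonneg (x - y), mul_nonneg (sq_nonneg η) (norm_nonneg (x - y)),
      mul_nonneg hη.le (norm_nonneg (x - y))]
  have hθ : 0 < 1 - 2 * η := by linarith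
  obtain ⟨hinj, hHaus⟩ := hausdorffMeasure_le_of_mul_dist_le n hθ hψ
  have hψB : MeasurableSet (ψ '' B) := by
    refine hB.image_of_continuousOn_injOn ?_ hinj
    have hdiv : ContinuousOn (fun x : Euc (n + 1) => h / ⟪x, e⟫) B :=
      continuousOn_const.div (Continuous.continuousOn (by fun_prop))
        fun x hx => (hh0.trans_le (hheight hx).1).ne'
    exact hdiv.smul Q.continuous.continuousOn
  have hvol := hQ.volume_cone hψB hh0
  refine ⟨{p | 0 < ⟪p, e⟫ ∧ ⟪p, e⟫ ≤ h ∧ (h / ⟪p, e⟫) • Q p ∈ ψ '' B}, ?_, ?_, ?_⟩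
  · rintro p ⟨p0, p1, x, hx, hxp⟩
    obtain ⟨x1, x2⟩ := hheight hx
    have hx0 : 0 < ⟪x, e⟫ := hh0.trans_le x1
    refine ⟨⟪p, e⟫ / ⟪x, e⟫, by positivity, (div_le_one hx0).2 (p1.trans x1), x, hx, ?_⟩
    refine hQ.injective (Prod.ext ?_ ?_)
    · have := congrArg (fun z => (⟪p, e⟫ / h) • z) hxp
      simp only [ψ, smul_smul] at this
      rw [show ⟪p, e⟫ / h * (h / ⟪p, e⟫) = 1 by field_simp, one_smul,
        show ⟪p, e⟫ / h * (h / ⟪x, e⟫) = ⟪p, e⟫ / ⟪x, e⟫ by field_simp] at this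
      simp only [map_smul, this]
    · simp only [real_inner_smul_left]
      field_simp
  · have m1 : Measurable fun p : Euc (n + 1) => ⟪p, e⟫ := by fun_prop
    have m2 : Measurable fun p : Euc (n + 1) => (h / ⟪p, e⟫) • Q p := by fun_prop
    exact (measurableSet_lt measurable_const m1).inter
      ((measurableSet_le m1 measurable_const).inter (m2 hψB))
  · rw [hvol]
    rw [hc, Measure.smul_apply, smul_eq_mul] at hHaus
    have hHh : H * (1 - 2 * η) ≤ h := by nlinarith
    have hnn : (0 : ℝ) < n + 1 := by positivity
    calc ENNReal.ofReal (H * (1 - 2 * η) ^ (n + 1)) * μH[n] B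
        = ENNReal.ofReal (H * (1 - 2 * η)) * (ENNReal.ofReal ((1 - 2 * η) ^ n) * μH[n] B) := by
          rw [← mul_assoc, ← ENNReal.ofReal_mul (by positivity)]
          congr 2
          ring
      _ ≤ ENNReal.ofReal h * (c * volume (ψ '' B)) := by gcongr
      _ = c * (ENNReal.ofReal (n + 1) * (ENNReal.ofReal (h / (n + 1)) * volume (ψ '' B))) := by
          rw [← mul_assoc (ENNReal.ofReal (n + 1)), ← ENNReal.ofReal_mul (by positivity),
            mul_div_cancel₀ _ hnn.ne']
          ring

/-- Upper bound for the volume of the part of a parallel body lying over a nearly flat piece of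
the boundary. -/
lemma volume_outerSet_le {K : Set (Euc (n + 1))} (hK : IsCompact K) (hL : IsCompact L) (hρ : 0 < ρ)
    (hρL : Metric.closedBall 0 ρ ⊆ L)
    (hR : ρ ≤ R) (hRL : L ⊆ Metric.closedBall 0 R) (hη : 0 < η) (hη' : η < 1 / 2)
    {e : Euc (n + 1)} (he : ‖e‖ = 1) {Q : Euc (n + 1) →L[ℝ] Euc n} (hQ : IsSplitting e Q)
    (hUc : IsCompact U) (hU : U ⊆ Metric.closedBall e (η * ρ / (4 * R))) {t : ℝ} (ht : 0 ≤ t) :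
    volume (outerSet K U (K + t • L)) ≤
      ENNReal.ofReal (t * (supportFn L e / (1 - 2 * η))) * volume (Q '' outerSet K U (K + t • L)) := by
  refine hQ.volume_le (isCompact_outerSet hUc (hK.add (hL.smul t))) ?_
  rintro p ⟨⟨k, hk, _, ⟨l, hl, rfl⟩, rfl⟩, -⟩ q ⟨-, u, hu, huq⟩ hpq
  have h0 : L.Nonempty := ⟨0, hρL (by simp [hρ.le])⟩
  have hH := isGreatest_supportFn hL h0 e
  have hHρ := le_supportFn hL hρ hρL he
  set H := supportFn L e
  set ε := η * ρ / (4 * R)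
  have hR0 : 0 < R := by linarith
  have hRε : R * ε = η * ρ / 4 := by simp only [ε]; field_simp
  have hε : 0 < ε := by positivity
  have hεη : ε ≤ η / 4 := by
    have : R * ε ≤ R * (η / 4) := by rw [hRε]; nlinarith
    exact le_of_mul_le_mul_left this hR0
  have hH0 : 0 < H := by linarith
  have d1 : ‖u - e‖ ≤ ε := by simpa [dist_eq_norm] using hU hu
  have d2 : ‖e - u‖ ≤ ε := by rwa [norm_sub_rev]
  have a1 := inner_le_of_norm_sub_le (show ‖l‖ ≤ R by simpa using hRL hl) d1
  have a2 : ⟪l, e⟫ ≤ H := hH.2 ⟨l, hl, rfl⟩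
  have a3 := huq k hk
  have a4 := inner_le_of_norm_sub_le he.le d2
  rw [real_inner_self_eq_norm_sq, he] at a4
  simp only at hpq ⊢
  set d := k + t • l - q
  have a5 : ⟪d, u⟫ ≤ t * ⟪l, u⟫ := by
    have : d = (k - q) + t • l := by simp only [d]; abel
    rw [this, inner_add_left, real_inner_smul_left]
    linarith
  have a6 := hQ.inner_eq d u
  rw [show Q d = 0 by simp only [d]; rw [map_sub, hpq, sub_self], inner_zero_left, zero_add,
    real_inner_comm e u] at a6
  have hθ : 0 < 1 - 2 * η := by linarith
  rw [← mul_div_assoc, le_div_iff₀ hθ]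
  rcases le_or_gt ⟪d, e⟫ 0 with hneg | hpos
  · nlinarith [mul_nonneg ht hH0.le]
  · have b1 : ⟪d, e⟫ * (1 - η / 4) ≤ t * (H * (1 + η / 4)) := by
      calc ⟪d, e⟫ * (1 - η / 4) ≤ ⟪d, e⟫ * ⟪e, u⟫ := by gcongr; linarith
        _ = ⟪d, u⟫ := a6.symm
        _ ≤ t * ⟪l, u⟫ := a5
        _ ≤ t * (H * (1 + η / 4)) := by gcongr; nlinarith
    have b2 : 0 ≤ t * H := mul_nonneg ht hH0.le
    have b3 : (1 - η / 4) * (⟪d, e⟫ * (1 - 2 * η)) ≤ (1 - η / 4) * (t * H) := by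
      calc (1 - η / 4) * (⟪d, e⟫ * (1 - 2 * η))
          = (⟪d, e⟫ * (1 - η / 4)) * (1 - 2 * η) := by ring
        _ ≤ (t * (H * (1 + η / 4))) * (1 - 2 * η) := by gcongr
        _ = (t * H) * ((1 + η / 4) * (1 - 2 * η)) := by ring
        _ ≤ (t * H) * (1 - η / 4) := by gcongr; nlinarith
        _ = _ := by ring
    exact le_of_mul_le_mul_left b3 (by linarith)

end Estimates

lemma add_smul_mono {m : ℕ} {K L : Set (Euc m)} (hL : Convex ℝ L) (h0 : 0 ∈ L) {s t : ℝ}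
    (hs : 0 ≤ s) (hst : s ≤ t) : K + s • L ⊆ K + t • L := by
  refine add_subset_add_left ?_
  rintro _ ⟨l, hl, rfl⟩
  rcases hs.eq_or_lt with rfl | hs
  · exact ⟨0, h0, by simp⟩
  have ht := hs.trans_le hst
  refine ⟨(s / t) • l, hL.smul_mem_of_zero_mem h0 hl ⟨by positivity, (div_le_one ht).2 hst⟩, ?_⟩
  simp only [smul_smul]
  rw [mul_div_cancel₀ _ ht.ne']

lemma iInter_outerSet_add_smul {m : ℕ} {K L U : Set (Euc m)} (hK : IsCompact K) {R : ℝ}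
    (hRL : L ⊆ Metric.closedBall 0 R) (h0 : 0 ∈ L) :
    ⋂ k : ℕ, outerSet K U (K + (1 / ((k : ℝ) + 1)) • L) = outerSet K U K := by
  ext p
  rw [mem_iInter]
  constructor
  · intro h
    refine ⟨?_, (h 0).2⟩
    rw [← hK.isClosed.closure_eq, Metric.mem_closure_iff]
    intro δ hδ
    have hlim : Filter.Tendsto (fun k : ℕ => 1 / ((k : ℝ) + 1) * R) Filter.atTop (𝓝 0) := by
      simpa using tendsto_one_div_add_atTop_nhds_zero_nat.mul_const R
    obtain ⟨k, hk⟩ := (hlim.eventually (gt_mem_nhds hδ)).exists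
    obtain ⟨⟨x, hx, _, ⟨l, hl, rfl⟩, rfl⟩, -⟩ := h k
    refine ⟨x, hx, lt_of_le_of_lt ?_ hk⟩
    simp only [dist_eq_norm, add_sub_cancel_left, norm_smul, Real.norm_eq_abs]
    rw [abs_of_pos (by positivity)]
    gcongr
    simpa using hRL hl
  · rintro ⟨hp, hn⟩ k
    exact ⟨⟨p, hp, 0, ⟨0, h0, by simp⟩, by simp⟩, hn⟩

lemma tendsto_volume_image_outerSet {n m : ℕ} {K L U : Set (Euc m)} (hK : IsCompact K)
    (hL : IsCompact L) (hLc : Convex ℝ L) (h0 : 0 ∈ L) (hU : IsCompact U)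
    (Q : Euc m →L[ℝ] Euc n) :
    Filter.Tendsto (fun k : ℕ => volume.real (Q '' outerSet K U (K + (1 / ((k : ℝ) + 1)) • L)))
      Filter.atTop (𝓝 (volume.real (Q '' outerSet K U K))) := by
  obtain ⟨R, hRL⟩ := hL.isBounded.subset_closedBall 0
  set E : ℕ → Set (Euc m) := fun k => outerSet K U (K + (1 / ((k : ℝ) + 1)) • L)
  have hE (k : ℕ) : IsCompact (E k) := isCompact_outerSet hU (hK.add (hL.smul _))
  have hanti : Antitone E := by
    intro i j hij p hp
    exact ⟨add_smul_mono hLc h0 (by positivity) (by gcongr) hp.1, hp.2⟩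
  have himg : ⋂ k, Q '' E k = Q '' outerSet K U K := by
    rw [← iInter_outerSet_add_smul hK hRL h0]
    refine subset_antisymm ?_ (image_iInter_subset _ _)
    intro y hy
    have hne : (⋂ k, E k ∩ Q ⁻¹' {y}).Nonempty := by
      have hcl : IsClosed (Q ⁻¹' {y}) := isClosed_singleton.preimage Q.continuous
      refine IsCompact.nonempty_iInter_of_sequence_nonempty_isCompact_isClosed _
        (fun k => inter_subset_inter_left _ (hanti k.le_succ)) (fun k => ?_)
        ((hE 0).inter_right hcl) (fun k => (hE k).isClosed.inter hcl)
      obtain ⟨p, hp, hpy⟩ := mem_iInter.1 hy k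
      exact ⟨p, hp, hpy⟩
    obtain ⟨p, hp⟩ := hne
    rw [mem_iInter] at hp
    exact ⟨p, mem_iInter.2 fun k => (hp k).1, (hp 0).2⟩
  rw [← himg]
  have hfin (k : ℕ) : volume (Q '' E k) ≠ ∞ := ((hE k).image Q.continuous).measure_lt_top.ne
  refine (ENNReal.tendsto_toReal ?_).comp (tendsto_measure_iInter_atTop
    (fun k => ((hE k).image Q.continuous).measurableSet.nullMeasurableSet)
    (fun i j hij => image_mono (hanti hij)) ⟨0, hfin 0⟩)
  exact ((measure_mono (iInter_subset _ 0)).trans_lt (hfin 0).lt_top).ne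

lemma volume_add_smul_le {m : ℕ} {ι : Type*} [Fintype ι] {K L : Set (Euc m)} (hK : IsConvexBody K)
    {U : ι → Set (Euc m)} (hU : unitSphere m ⊆ ⋃ i, U i) (t : ℝ) :
    volume (K + t • L) ≤ volume K + ∑ i, volume (outerSet K (U i) (K + t • L)) := by
  have hsub : K + t • L ⊆ K ∪ ⋃ i, outerSet K (U i) (K + t • L) := by
    intro p hp
    by_cases hpK : p ∈ K
    · exact Or.inl hpK
    obtain ⟨u, hu, h⟩ := exists_normal hK.1 hK.2.2 fun h => hpK (interior_subset h)
    obtain ⟨i, hi⟩ := mem_iUnion.1 (hU (show u ∈ unitSphere m by simpa [unitSphere] using hu))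
    exact Or.inr (mem_iUnion.2 ⟨i, hp, u, hi, h⟩)
  refine (measure_mono hsub).trans ((measure_union_le _ _).trans ?_)
  gcongr
  exact measure_iUnion_fintype_le _ _

/-- The sphere has finite closed covers by small sets overlapping in null sets only. -/
lemma exists_closed_cover {m : ℕ} (μ : Measure (Euc m)) [SFinite μ] {ε : ℝ} (hε : 0 < ε) :
    ∃ (k : ℕ) (e : Fin k → Euc m) (U : Fin k → Set (Euc m)), (∀ i, ‖e i‖ = 1) ∧
      (∀ i, IsClosed (U i)) ∧ (∀ i, U i ⊆ unitSphere m) ∧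
      (∀ i, U i ⊆ Metric.closedBall (e i) ε) ∧ unitSphere m ⊆ ⋃ i, U i ∧
      ∀ i j, j < i → μ (U i ∩ U j) = 0 := by
  have hr (x : Euc m) : ∃ r, 0 < r ∧ r < ε ∧ μ (Metric.sphere x r) = 0 := by
    obtain ⟨r, hr, h⟩ := exists_null_frontier_thickening μ {x} hε
    rw [Metric.thickening_singleton, frontier_ball x hr.1.ne'] at h
    exact ⟨r, hr.1, hr.2, h⟩
  choose r hr0 hrε hrμ using hr
  obtain ⟨t, ht, htc⟩ := (isCompact_unitSphere m).elim_nhds_subcover (fun x => Metric.ball x (r x))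
    fun x _ => Metric.ball_mem_nhds x (hr0 x)
  let e : Fin t.card → Euc m := fun i => t.equivFin.symm i
  have het (i) : e i ∈ t := (t.equivFin.symm i).2
  refine ⟨t.card, e, fun i => (Metric.closedBall (e i) (r (e i)) ∩ unitSphere m) \
    ⋃ j : {j // j < i}, Metric.ball (e j) (r (e j)), fun i => ?_, fun i => ?_, fun i => ?_,
    fun i => ?_, fun x hx => ?_, fun i j hij => ?_⟩
  · simpa [unitSphere] using ht _ (het i)
  · exact (Metric.isClosed_closedBall.inter (isCompact_unitSphere m).isClosed).sdiff
      (isOpen_iUnion fun _ => Metric.isOpen_ball)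
  · exact fun x hx => hx.1.2
  · exact fun x hx => Metric.closedBall_subset_closedBall (hrε _).le hx.1.1
  · have hex : ∃ i, x ∈ Metric.ball (e i) (r (e i)) := by
      obtain ⟨y, hy, hxy⟩ := mem_iUnion₂.1 (htc hx)
      refine ⟨t.equivFin ⟨y, hy⟩, ?_⟩
      simpa [e] using hxy
    obtain ⟨i, hi, hmin⟩ := WellFounded.has_min (wellFounded_lt (α := Fin t.card))
      {i | x ∈ Metric.ball (e i) (r (e i))} hex
    refine mem_iUnion.2 ⟨i, ⟨Metric.ball_subset_closedBall hi, hx⟩, fun h => ?_⟩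
    obtain ⟨⟨j, hj⟩, hxj⟩ := mem_iUnion.1 h
    exact hmin j hxj hj
  · refine measure_mono_null ?_ (hrμ (e j))
    rintro x ⟨⟨-, hx⟩, ⟨hx', -⟩, -⟩
    have h1 : x ∉ Metric.ball (e j) (r (e j)) := fun h => hx (mem_iUnion.2 ⟨⟨j, hij⟩, h⟩)
    exact le_antisymm hx' (not_lt.1 h1)

lemma pow_succ_add_mul_le_add_pow {a b : ℝ} (ha : 0 ≤ a) (hb : 0 ≤ b) (n : ℕ) :
    a ^ (n + 1) + (n + 1) * a ^ n * b ≤ (a + b) ^ (n + 1) := by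
  induction n with
  | zero => simp
  | succ n ih =>
    have h : 0 ≤ (n + 1) * a ^ n * b ^ 2 := by positivity
    calc a ^ (n + 1 + 1) + ((n + 1 : ℕ) + 1) * a ^ (n + 1) * b
        ≤ (a ^ (n + 1) + (n + 1) * a ^ n * b) * (a + b) := by
          push_cast
          linear_combination h
      _ ≤ (a + b) ^ (n + 1) * (a + b) := by gcongr
      _ = (a + b) ^ (n + 1 + 1) := (pow_succ _ _).symm

/-- An approximate form of Minkowski's first inequality. -/
lemma mul_pow_mul_le_sum {n k : ℕ} {K L : Set (Euc (n + 1))} {ρ R η : ℝ} (hK : IsConvexBody K)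
    (hL : IsConvexBody L) (hρ : 0 < ρ) (hρL : Metric.closedBall 0 ρ ⊆ L)
    (hR : ρ ≤ R) (hRL : L ⊆ Metric.closedBall 0 R) (hη : 0 < η) (hη' : η < 1 / 2)
    {e : Fin k → Euc (n + 1)} (he : ∀ i, ‖e i‖ = 1) {Q : Fin k → Euc (n + 1) →L[ℝ] Euc n}
    (hQ : ∀ i, IsSplitting (e i) (Q i)) {U : Fin k → Set (Euc (n + 1))}
    (hUc : ∀ i, IsCompact (U i)) (hU : ∀ i, U i ⊆ Metric.closedBall (e i) (η * ρ / (4 * R)))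
    (hcover : unitSphere (n + 1) ⊆ ⋃ i, U i) {a b : ℝ} (ha : 0 ≤ a) (hb : 0 ≤ b)
    (haK : a ^ (n + 1) = volume.real K) (hbL : b ^ (n + 1) = volume.real L) :
    (n + 1) * a ^ n * b ≤
      ∑ i, supportFn L (e i) / (1 - 2 * η) * volume.real (Q i '' outerSet K (U i) K) := by
  have h0 : (0 : Euc (n + 1)) ∈ L := hρL (by simp [hρ.le])
  have hlim := tendsto_finsetSum (Finset.univ : Finset (Fin k)) fun i _ =>
    (tendsto_volume_image_outerSet hK.2.1 hL.2.1 hL.1 h0 (hUc i) (Q i)).const_mul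
      (supportFn L (e i) / (1 - 2 * η))
  refine ge_of_tendsto' hlim fun l => ?_
  set t : ℝ := 1 / ((l : ℝ) + 1)
  have ht : 0 < t := by positivity
  have hθ : 0 < 1 - 2 * η := by linarith
  have hH (i) : 0 ≤ supportFn L (e i) / (1 - 2 * η) :=
    div_nonneg (hρ.le.trans (le_supportFn hL.2.1 hρ hρL (he i))) hθ.le
  have hbm : (a + t * b) ^ (n + 1) ≤ volume.real (K + t • L) := by
    refine brunn_minkowski hK.2.1 (hL.2.1.smul t) (hK.2.2.mono interior_subset)
      (Set.Nonempty.smul_set ⟨0, h0⟩) ha (by positivity) haK.le ?_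
    rw [mul_pow, hbL, measureReal_def, measureReal_def, Measure.addHaar_smul, ENNReal.toReal_mul,
      finrank_euclideanSpace_fin, ENNReal.toReal_ofReal (abs_nonneg _), abs_of_pos (by positivity)]
  have hup : volume.real (K + t • L) ≤ volume.real K + ∑ i, t * (supportFn L (e i) / (1 - 2 * η)) *
      volume.real (Q i '' outerSet K (U i) (K + t • L)) := by
    have hnn (i) : 0 ≤ t * (supportFn L (e i) / (1 - 2 * η)) *
      volume.real (Q i '' outerSet K (U i) (K + t • L)) :=
        mul_nonneg (mul_nonneg ht.le (hH i)) measureReal_nonneg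
    refine ENNReal.toReal_le_of_le_ofReal
      (add_nonneg measureReal_nonneg (Finset.sum_nonneg fun i _ => hnn i)) ?_
    refine (volume_add_smul_le hK hcover t).trans ?_
    rw [ENNReal.ofReal_add measureReal_nonneg (Finset.sum_nonneg fun i _ => hnn i),
      ENNReal.ofReal_sum_of_nonneg fun i _ => hnn i, ofReal_measureReal hK.2.1.measure_lt_top.ne]
    gcongr with i
    rw [ENNReal.ofReal_mul (mul_nonneg ht.le (hH i)), ofReal_measureReal
      ((isCompact_outerSet (hUc i) (hK.2.1.add (hL.2.1.smul t))).image
        (Q i).continuous).measure_lt_top.ne]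
    exact volume_outerSet_le hK.2.1 hL.2.1 hρ hρL hR hRL hη hη' (he i) (hQ i) (hUc i) (hU i) ht.le
  have hbern := pow_succ_add_mul_le_add_pow ha (by positivity : 0 ≤ t * b) n
  simp only [mul_assoc t, ← Finset.mul_sum] at hup
  refine le_of_mul_le_mul_left ?_ ht
  rw [haK] at hbern
  linarith

lemma IsConvexBody.surfMeasure_unitSphere_lt_top {n : ℕ} {L : Set (Euc (n + 2))} {ρ R : ℝ}
    (hL : IsConvexBody L) (hρ : 0 < ρ) (hρL : Metric.closedBall 0 ρ ⊆ L)
    (hR : ρ ≤ R) (hRL : L ⊆ Metric.closedBall 0 R) : surfMeasure L (unitSphere (n + 2)) < ∞ := by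
  have hR0 : 0 < R := hρ.trans_le hR
  refine (isCompact_unitSphere _).measure_lt_top_of_nhdsWithin fun e he => ?_
  have he1 : ‖e‖ = 1 := by simpa [unitSphere] using he
  set U := Metric.closedBall e (1 / 4 * ρ / (4 * R)) ∩ unitSphere (n + 2)
  have hUc : IsClosed U := Metric.isClosed_closedBall.inter (isCompact_unitSphere _).isClosed
  refine ⟨U, Filter.inter_mem (mem_nhdsWithin_of_mem_nhds
    (Metric.closedBall_mem_nhds e (by positivity))) self_mem_nhdsWithin, ?_⟩
  rw [surfMeasure_eq hL hUc inter_subset_right]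
  have hB : IsCompact (outerSet L U L) :=
    isCompact_outerSet ((isCompact_unitSphere _).of_isClosed_subset hUc inter_subset_right) hL.2.1
  obtain ⟨c, -, hc, hcv⟩ := exists_hausdorffMeasure_eq_smul (n + 1)
  obtain ⟨T, hT, -, h⟩ := exists_subset_coneOver hL.2.1 hρ hρL hR hRL (by norm_num) (by norm_num)
    he1 inter_subset_left hB.measurableSet subset_rfl hcv
  have hTL : volume T < ∞ := (measure_mono (hT.trans (coneOver_subset hL.1
    (hρL (by simp [hρ.le])) fun x hx => hx.1))).trans_lt hL.2.1.measure_lt_top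
  have hH := hρ.trans_le (le_supportFn hL.2.1 hρ hρL he1)
  refine ENNReal.lt_top_of_mul_ne_top_right (h.trans_lt (ENNReal.mul_lt_top hc.lt_top
    (ENNReal.mul_lt_top ENNReal.ofReal_lt_top hTL))).ne ?_
  rw [Ne, ENNReal.ofReal_eq_zero, not_le]
  positivity

/-- Pieces of the boundary with almost disjoint sets of normals are almost disjoint. -/
lemma hausdorffMeasure_outerSet_inter {n : ℕ} {L U V : Set (Euc (n + 2))} (hL : IsConvexBody L)
    (hU : IsClosed U) (hV : IsClosed V) (hUs : U ⊆ unitSphere (n + 2))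
    (hVs : V ⊆ unitSphere (n + 2)) (h : surfMeasure L (U ∩ V) = 0) :
    μH[(n + 1 : ℕ)] (outerSet L U L ∩ outerSet L V L) = 0 := by
  have hUV : U ∩ V ⊆ unitSphere (n + 2) := inter_subset_left.trans hUs
  rw [surfMeasure_eq hL (hU.inter hV) hUV] at h
  refine measure_mono_null ?_ (measure_union_null h (hausdorffMeasure_singularSet hL))
  intro x hx
  have hxf := outerSet_self_subset_frontier hUs hx.1
  obtain ⟨⟨hxL, u, hu, hux⟩, -, v, hv, hvx⟩ := hx
  by_cases huv : u = v
  · subst huv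
    exact Or.inl ⟨hxL, u, ⟨hu, hv⟩, hux⟩
  · refine Or.inr ⟨u, v, huv, ⟨hxf, ?_, hux⟩, hxf, ?_, hvx⟩
    · simpa [unitSphere] using hUs hu
    · simpa [unitSphere] using hVs hv

lemma sum_supportFn_mul_volume_le {n k : ℕ} {K L : Set (Euc (n + 2))} {ρ R η : ℝ}
    (hK : IsConvexBody K) (hL : IsConvexBody L) (hρ : 0 < ρ) (hρL : Metric.closedBall 0 ρ ⊆ L)
    (hR : ρ ≤ R) (hRL : L ⊆ Metric.closedBall 0 R) (hη : 0 < η) (hη' : η < 1 / 2)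
    {e : Fin k → Euc (n + 2)} (he : ∀ i, ‖e i‖ = 1) {Q : Fin k → Euc (n + 2) →L[ℝ] Euc (n + 1)}
    (hQ : ∀ i, IsSplitting (e i) (Q i)) {U : Fin k → Set (Euc (n + 2))}
    (hUc : ∀ i, IsClosed (U i)) (hUs : ∀ i, U i ⊆ unitSphere (n + 2))
    (hU : ∀ i, U i ⊆ Metric.closedBall (e i) (η * ρ / (4 * R)))
    (hnull : ∀ i j, j < i → surfMeasure L (U i ∩ U j) = 0)
    (hdom : ∀ i, μH[(n + 1 : ℕ)] (outerSet K (U i) K) ≤ μH[(n + 1 : ℕ)] (outerSet L (U i) L)) :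
    (1 - 2 * η) ^ (n + 2) * ∑ i, supportFn L (e i) * volume.real (Q i '' outerSet K (U i) K) ≤
      (n + 2) * volume.real L := by
  obtain ⟨c, hc0, hc, hcv⟩ := exists_hausdorffMeasure_eq_smul (n + 1)
  have hUk (i) : IsCompact (U i) := (isCompact_unitSphere _).of_isClosed_subset (hUc i) (hUs i)
  have hC (i) : IsCompact (outerSet L (U i) L) := isCompact_outerSet (hUk i) hL.2.1
  have hQK (i) : volume (Q i '' outerSet K (U i) K) ≠ ∞ :=
    ((isCompact_outerSet (hUk i) hK.2.1).image (Q i).continuous).measure_lt_top.ne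
  set B : Fin k → Set (Euc (n + 2)) := fun i =>
    outerSet L (U i) L \ ⋃ j : {j // j < i}, outerSet L (U j) L
  have hBm (i) : MeasurableSet (B i) :=
    (hC i).measurableSet.diff (MeasurableSet.iUnion fun j => (hC j).measurableSet)
  have hBH (i) : μH[(n + 1 : ℕ)] (B i) = μH[(n + 1 : ℕ)] (outerSet L (U i) L) := by
    refine measure_sdiff_null' ?_
    rw [inter_iUnion]
    exact measure_iUnion_null fun j =>
      hausdorffMeasure_outerSet_inter hL (hUc i) (hUc j) (hUs i) (hUs j) (hnull i j j.2)
  have hBsub (i) : B i ⊆ outerSet L (unitSphere (n + 2)) L :=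
    sdiff_subset.trans (outerSet_mono_left (hUs i))
  have hBdisj : Pairwise (Function.onFun Disjoint B) := by
    have key {i j : Fin k} (hij : j < i) : Disjoint (B i) (B j) := by
      rw [Set.disjoint_left]
      exact fun x hx hxj => hx.2 (mem_iUnion.2 ⟨⟨j, hij⟩, hxj.1⟩)
    intro i j hij
    rcases lt_or_gt_of_ne hij with h | h
    · exact (key h).symm
    · exact key h
  choose T hTsub hTm hT using fun i => exists_subset_coneOver hL.2.1 hρ hρL hR hRL hη hη' (he i)
    (hU i) (hBm i) sdiff_subset hcv
  have hTdisj : Pairwise (Function.onFun Disjoint T) := fun i j hij =>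
    (disjoint_coneOver hρ hρL (hBsub i) (hBsub j) (hBdisj hij)).mono (hTsub i) (hTsub j)
  have hTL : ∑ i, volume (T i) ≤ volume L := by
    rw [← tsum_fintype (L := .unconditional _), ← measure_iUnion hTdisj hTm]
    refine measure_mono (iUnion_subset fun i => (hTsub i).trans ?_)
    exact coneOver_subset hL.1 (hρL (by simp [hρ.le])) fun x hx => hx.1.1
  have hpiece (i) : ENNReal.ofReal (supportFn L (e i) * (1 - 2 * η) ^ (n + 2)) *
      volume (Q i '' outerSet K (U i) K) ≤ ENNReal.ofReal (n + 2) * volume (T i) := by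
    have h1 : c * volume (Q i '' outerSet K (U i) K) ≤ μH[(n + 1 : ℕ)] (B i) := by
      rw [hBH, ← smul_eq_mul, ← Measure.smul_apply, ← hcv]
      exact ((hQ i).hausdorffMeasure_image_le _).trans (hdom i)
    have h2 := (mul_le_mul_right h1 (ENNReal.ofReal (supportFn L (e i) * (1 - 2 * η) ^ (n + 2)))).trans
      (hT i)
    rw [mul_left_comm, ENNReal.mul_le_mul_iff_right hc0 hc] at h2
    convert h2 using 3
    push_cast
    ring
  have hθ : 0 < 1 - 2 * η := by linarith
  have hH (i) : 0 ≤ supportFn L (e i) := hρ.le.trans (le_supportFn hL.2.1 hρ hρL (he i))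
  rw [Finset.mul_sum, ← ENNReal.ofReal_le_ofReal_iff (mul_nonneg (by positivity) measureReal_nonneg),
    ENNReal.ofReal_sum_of_nonneg fun i _ => mul_nonneg (by positivity)
      (mul_nonneg (hH i) measureReal_nonneg), ENNReal.ofReal_mul (by positivity),
    ofReal_measureReal hL.2.1.measure_lt_top.ne]
  calc _ = ∑ i, ENNReal.ofReal (supportFn L (e i) * (1 - 2 * η) ^ (n + 2)) *
        volume (Q i '' outerSet K (U i) K) := by
        refine Finset.sum_congr rfl fun i _ => ?_
        rw [← mul_assoc, mul_comm (_ ^ _), ENNReal.ofReal_mul (mul_nonneg (hH i) (by positivity)),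
          ofReal_measureReal (hQK i)]
    _ ≤ ∑ i, ENNReal.ofReal (n + 2) * volume (T i) := Finset.sum_le_sum fun i _ => hpiece i
    _ ≤ ENNReal.ofReal (n + 2) * volume L := by rw [← Finset.mul_sum]; gcongr

lemma volume_le_of_hausdorffMeasure_outerSet_le {n : ℕ} {K L : Set (Euc (n + 2))} {ρ : ℝ}
    (hK : IsConvexBody K) (hL : IsConvexBody L) (hρ : 0 < ρ) (hρL : Metric.closedBall 0 ρ ⊆ L)
    (hdom : ∀ U, IsClosed U → U ⊆ unitSphere (n + 2) →
      μH[(n + 1 : ℕ)] (outerSet K U K) ≤ μH[(n + 1 : ℕ)] (outerSet L U L)) :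
    volume K ≤ volume L := by
  obtain ⟨R₀, hR₀⟩ := hL.2.1.isBounded.subset_closedBall 0
  obtain ⟨R, hR, hRL⟩ : ∃ R, ρ ≤ R ∧ L ⊆ Metric.closedBall 0 R :=
    ⟨max ρ R₀, le_max_left _ _, hR₀.trans (Metric.closedBall_subset_closedBall (le_max_right _ _))⟩
  have hR0 : 0 < R := hρ.trans_le hR
  have hroot {x : ℝ} (hx : 0 ≤ x) : ∃ a, 0 ≤ a ∧ a ^ (n + 2) = x :=
    ⟨x ^ (((n + 2 : ℕ) : ℝ)⁻¹), by positivity, Real.rpow_inv_natCast_pow hx (by simp)⟩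
  obtain ⟨a, ha, haK⟩ := hroot (measureReal_nonneg (μ := volume) (s := K))
  obtain ⟨b, hb, hbL⟩ := hroot (measureReal_nonneg (μ := volume) (s := L))
  have hb0 : 0 < b := by
    refine hb.lt_of_ne' fun h => ?_
    rw [h, zero_pow (by simp), eq_comm, measureReal_eq_zero_iff hL.2.1.measure_lt_top.ne] at hbL
    exact (Measure.measure_pos_of_nonempty_interior volume hL.2.2).ne' hbL
  have hfin : IsFiniteMeasure ((surfMeasure L).restrict (unitSphere (n + 2))) :=
    ⟨by simpa using hL.surfMeasure_unitSphere_lt_top hρ hρL hR hRL⟩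
  have key (η : ℝ) (hη : 0 < η) (hη' : η < 1 / 2) :
      (1 - 2 * η) ^ (n + 3) * (a ^ (n + 1) * b) ≤ b ^ (n + 2) := by
    obtain ⟨k, e, U, he, hUc, hUs, hU, hcover, hnull⟩ := exists_closed_cover
      ((surfMeasure L).restrict (unitSphere (n + 2))) (show 0 < η * ρ / (4 * R) by positivity)
    choose Q hQ using fun i => exists_isSplitting (e i) (he i)
    have h1 := mul_pow_mul_le_sum hK hL hρ hρL hR hRL hη hη' he hQ
      (fun i => (isCompact_unitSphere _).of_isClosed_subset (hUc i) (hUs i)) hU hcover ha hb haK hbL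
    have h2 := sum_supportFn_mul_volume_le hK hL hρ hρL hR hRL hη hη' he hQ hUc hUs hU
      (fun i j hij => by
        have := hnull i j hij
        rwa [Measure.restrict_eq_self _ (inter_subset_left.trans (hUs i))] at this)
      fun i => hdom _ (hUc i) (hUs i)
    have hθ : 0 < 1 - 2 * η := by linarith
    simp only [div_mul_eq_mul_div, ← Finset.sum_div] at h1
    rw [le_div_iff₀ hθ] at h1
    have h3 := (mul_le_mul_of_nonneg_left h1 (pow_pos hθ (n + 2)).le).trans h2
    rw [← hbL] at h3
    push_cast at h3
    refine le_of_mul_le_mul_left ?_ (show (0 : ℝ) < n + 2 by positivity)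
    linear_combination h3
  have hlim : Filter.Tendsto (fun η : ℝ => (1 - 2 * η) ^ (n + 3) * (a ^ (n + 1) * b)) (𝓝[>] 0)
      (𝓝 (a ^ (n + 1) * b)) := by
    have : Continuous fun η : ℝ => (1 - 2 * η) ^ (n + 3) * (a ^ (n + 1) * b) := by fun_prop
    refine tendsto_nhdsWithin_of_tendsto_nhds ?_
    simpa using this.tendsto 0
  have hfinal : a ^ (n + 1) * b ≤ b ^ (n + 1) * b := by
    rw [← pow_succ]
    refine le_of_tendsto hlim ?_
    filter_upwards [Ioo_mem_nhdsGT (show (0 : ℝ) < 1 / 2 by norm_num)] with η hη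
    exact key η hη.1 hη.2
  have hab : a ≤ b :=
    le_of_pow_le_pow_left₀ (Nat.succ_ne_zero n) hb (le_of_mul_le_mul_right hfinal hb0)
  rw [← ENNReal.toReal_le_toReal hK.2.1.measure_lt_top.ne hL.2.1.measure_lt_top.ne]
  change volume.real K ≤ volume.real L
  rw [← haK, ← hbL]
  gcongr

lemma IsConvexBody.preimage_add_right {m : ℕ} {L : Set (Euc m)} (hL : IsConvexBody L) (p : Euc m) :
    IsConvexBody ((· + p) ⁻¹' L) := by
  refine ⟨hL.1.translate_preimage_left p, (Homeomorph.addRight p).isCompact_preimage.2 hL.2.1, ?_⟩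
  have := (Homeomorph.addRight p).preimage_interior L
  simp only [Homeomorph.coe_addRight] at this
  rw [← this]
  obtain ⟨x, hx⟩ := hL.2.2
  exact ⟨x - p, by simpa using hx⟩

lemma hausdorffMeasure_outerSet_preimage_add_right {m : ℕ} (L U : Set (Euc m)) (p : Euc m) (d : ℝ) :
    μH[d] (outerSet ((· + p) ⁻¹' L) U ((· + p) ⁻¹' L)) = μH[d] (outerSet L U L) := by
  rw [← (IsometryEquiv.addRight p).hausdorffMeasure_preimage d (outerSet L U L)]
  congr 1
  ext x
  simp only [outerSet, mem_ofPred_eq, mem_preimage, IsometryEquiv.addRight_apply]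
  refine and_congr_right fun _ => exists_congr fun u => and_congr_right fun _ => ?_
  constructor
  · intro h y hy
    simpa [sub_sub, add_comm] using h (y - p) (by simpa using hy)
  · intro h y hy
    simpa using h (y + p) hy

/-- monotonicity of volume under domination of surface area measures. -/
theorem volume_monotone_of_surf_le {m : ℕ} (hm : 2 ≤ m)
    (K L : Set (Euc m)) (hK : IsConvexBody K) (hL : IsConvexBody L)
    (hdom : ∀ U : Set (Euc m), MeasurableSet U → surfMeasure K U ≤ surfMeasure L U) :
    volume K ≤ volume L := by
  obtain ⟨n, rfl⟩ := Nat.exists_eq_add_of_le' hm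
  obtain ⟨p, hp⟩ := hL.2.2
  obtain ⟨ρ, hρ, hρL⟩ := Metric.nhds_basis_closedBall.mem_iff.1 (mem_interior_iff_mem_nhds.1 hp)
  rw [← measure_preimage_add_right volume p L]
  refine volume_le_of_hausdorffMeasure_outerSet_le hK (hL.preimage_add_right p) hρ
    (fun x hx => hρL ?_) fun U hU hUs => ?_
  · simpa [dist_eq_norm] using hx
  · rw [hausdorffMeasure_outerSet_preimage_add_right, ← surfMeasure_eq hK hU hUs,
      ← surfMeasure_eq hL hU hUs]
    exact hdom U hU.measurableSet
end
end

section
/- Let P and Q be compact convex polytopes with nonempty interior in R^m such that for every unit vector n which is an outward facet normal of P or of Q, the (m−1)-dimensional volume of the face of P with outward normal n is at least the (m−1)-dimensional volume of the face of Q with outward normal n. Then Vol_m(P) ≥ Vol_m(Q). -/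
open MeasureTheory Set
open scoped ENNReal Pointwise RealInnerProductSpace Topology

noncomputable section

/-- One-dimensional Brunn–Minkowski inequality. -/
theorem volume_add_le_of_add_subset {A B C : Set ℝ} (hA : MeasurableSet A) (hB : MeasurableSet B)
    (hAne : A.Nonempty) (hBne : B.Nonempty) (hC : A + B ⊆ C) :
    volume A + volume B ≤ volume C := by
  have key : ∀ K ⊆ A, IsCompact K → ∀ L ⊆ B, IsCompact L → K.Nonempty → L.Nonempty →
      volume K + volume L ≤ volume C := by
    intro K hKA hK L hLB hL hKne hLne
    obtain ⟨k, hkK, hk⟩ := hK.exists_isGreatest hKne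
    obtain ⟨l, hlL, hl⟩ := hL.exists_isLeast hLne
    have hKl : (K + {l}) ∪ ({k} + L) ⊆ C := by
      refine Set.union_subset ?_ ?_ <;> refine Subset.trans ?_ hC
      · exact Set.add_subset_add hKA (by simpa using hLB hlL)
      · exact Set.add_subset_add (by simpa using hKA hkK) hLB
    have hd : AEDisjoint volume (K + {l}) ({k} + L) := by
      refine measure_mono_null (t := {k + l}) ?_ (by simp)
      rintro x ⟨⟨a, ha, b, hb, rfl⟩, ⟨a', ha', b', hb', h⟩⟩
      simp only [Set.mem_singleton_iff] at *
      subst hb ha'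
      have h1 := hk ha
      have h2 := hl hb'
      linarith
    calc volume K + volume L = volume (K + {l}) + volume ({k} + L) := by
          simp
      _ = volume ((K + {l}) ∪ ({k} + L)) :=
          (measure_union₀ (isCompact_singleton.add hL).measurableSet.nullMeasurableSet hd).symm
      _ ≤ volume C := measure_mono hKl
  obtain ⟨a, ha⟩ := hAne
  obtain ⟨b, hb⟩ := hBne
  have key' : ∀ K ⊆ A, IsCompact K → ∀ L ⊆ B, IsCompact L → volume K + volume L ≤ volume C := by
    intro K hKA hK L hLB hL
    refine le_trans (add_le_add (measure_mono (subset_insert a K))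
      (measure_mono (subset_insert b L))) (key _ (insert_subset ha hKA) (hK.insert a) _
        (insert_subset hb hLB) (hL.insert b) (insert_nonempty _ _) (insert_nonempty _ _))
  rw [hA.measure_eq_iSup_isCompact, hB.measure_eq_iSup_isCompact]
  simp only [iSup_and']
  refine ENNReal.biSup_add_biSup_le' (p := fun K => K ⊆ A ∧ IsCompact K)
    (q := fun K => K ⊆ B ∧ IsCompact K) ⟨∅, by simp⟩ ⟨∅, by simp⟩ ?_
  intro K hK L hL
  exact key' K hK.1 hK.2 L hL.1 hL.2

theorem prekopa_leindler_real_normalized {a b : ℝ} (ha : 0 < a) (hb : 0 < b) (hab : a + b = 1)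
    {f g h : ℝ → ℝ} (hf : Measurable f) (hg : Measurable g) (hh : Measurable h)
    (hf0 : 0 ≤ f) (hg0 : 0 ≤ g) (hh0 : 0 ≤ h) (hf1 : ∀ x, f x ≤ 1) (hg1 : ∀ x, g x ≤ 1)
    (hfs : ∀ t < 1, ∃ x, t < f x) (hgs : ∀ t < 1, ∃ x, t < g x)
    (H : ∀ x y, f x ^ a * g y ^ b ≤ h (a * x + b * y)) :
    ENNReal.ofReal a * (∫⁻ x, ENNReal.ofReal (f x)) +
        ENNReal.ofReal b * (∫⁻ x, ENNReal.ofReal (g x)) ≤ ∫⁻ x, ENNReal.ofReal (h x) := by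
  rw [lintegral_eq_lintegral_meas_lt _ (Filter.Eventually.of_forall hf0) hf.aemeasurable,
    lintegral_eq_lintegral_meas_lt _ (Filter.Eventually.of_forall hg0) hg.aemeasurable,
    lintegral_eq_lintegral_meas_lt _ (Filter.Eventually.of_forall hh0) hh.aemeasurable]
  have hm : ∀ k : ℝ → ℝ, Measurable fun t : ℝ => volume {x | t < k x} := fun k =>
    Antitone.measurable fun s t hst => measure_mono fun x (hx : t < k x) => lt_of_le_of_lt hst hx
  rw [← lintegral_const_mul _ (hm f), ← lintegral_const_mul _ (hm g),
    ← lintegral_add_left ((hm f).const_mul _)]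
  refine lintegral_mono_ae ((ae_restrict_iff' measurableSet_Ioi).2
    (Filter.Eventually.of_forall fun t (ht : 0 < t) => ?_))
  rcases le_or_gt 1 t with h1 | h1
  · have e1 : {x | t < f x} = ∅ := by
      ext x; simpa using (hf1 x).trans h1
    have e2 : {x | t < g x} = ∅ := by
      ext x; simpa using (hg1 x).trans h1
    simp [e1, e2]
  · have sc : ∀ (c : ℝ) (_ : 0 < c) (S : Set ℝ), volume (c • S) = ENNReal.ofReal c * volume S := by
      intro c hc S
      rw [Measure.addHaar_smul]
      simp [abs_of_pos hc]
    rw [← sc a ha, ← sc b hb]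
    refine volume_add_le_of_add_subset
      ((measurableSet_lt measurable_const hf).const_smul₀ a)
      ((measurableSet_lt measurable_const hg).const_smul₀ b)
      (Set.Nonempty.image _ (hfs t h1)) (Set.Nonempty.image _ (hgs t h1)) ?_
    rintro _ ⟨_, ⟨x, hx, rfl⟩, _, ⟨y, hy, rfl⟩, rfl⟩
    refine lt_of_lt_of_le ?_ (H x y)
    calc t = t ^ a * t ^ b := by rw [← Real.rpow_add ht, hab, Real.rpow_one]
      _ < f x ^ a * g y ^ b := mul_lt_mul'' (Real.rpow_lt_rpow ht.le hx ha)
          (Real.rpow_lt_rpow ht.le hy hb) (by positivity) (by positivity)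

theorem ENNReal.rpow_mul_rpow_le_add {a b : ℝ} (ha : 0 < a) (hb : 0 < b) (hab : a + b = 1)
    (x y : ℝ≥0∞) : x ^ a * y ^ b ≤ ENNReal.ofReal a * x + ENNReal.ofReal b * y := by
  by_cases hx : x = ∞
  · simp [hx, ENNReal.mul_top, ha]
  by_cases hy : y = ∞
  · simp [hy, ENNReal.mul_top, hb]
  rw [← ENNReal.ofReal_toReal hx, ← ENNReal.ofReal_toReal hy,
    ENNReal.ofReal_rpow_of_nonneg ENNReal.toReal_nonneg ha.le,
    ENNReal.ofReal_rpow_of_nonneg ENNReal.toReal_nonneg hb.le,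
    ← ENNReal.ofReal_mul (by positivity), ← ENNReal.ofReal_mul ha.le, ← ENNReal.ofReal_mul hb.le,
    ← ENNReal.ofReal_add (by positivity) (by positivity)]
  exact ENNReal.ofReal_le_ofReal (Real.geom_mean_le_arith_mean2_weighted ha.le hb.le
    ENNReal.toReal_nonneg ENNReal.toReal_nonneg hab)

theorem prekopa_leindler_real_of_bounded {a b : ℝ} (ha : 0 < a) (hb : 0 < b) (hab : a + b = 1)
    {f g h : ℝ → ℝ≥0∞} (hf : Measurable f) (hg : Measurable g) (hh : Measurable h)
    (hfb : ⨆ x, f x ≠ ∞) (hgb : ⨆ x, g x ≠ ∞)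
    (H : ∀ x y, f x ^ a * g y ^ b ≤ h (a * x + b * y)) :
    (∫⁻ x, f x) ^ a * (∫⁻ x, g x) ^ b ≤ ∫⁻ x, h x := by
  set A := ⨆ x, f x with hA
  set B := ⨆ x, g x with hB
  by_cases hA0 : A = 0
  · have : f = 0 := funext fun x => ENNReal.iSup_eq_zero.1 (hA.symm.trans hA0) x
    simp [this, ha]
  by_cases hB0 : B = 0
  · have : g = 0 := funext fun x => ENNReal.iSup_eq_zero.1 (hB.symm.trans hB0) x
    simp [this, hb]
  set M := A ^ a * B ^ b with hM
  have hAa0 : A ^ a ≠ 0 := by simp [hA0, hfb]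
  have hBb0 : B ^ b ≠ 0 := by simp [hB0, hgb]
  have hAat : A ^ a ≠ ∞ := ENNReal.rpow_ne_top_of_nonneg ha.le hfb
  have hBbt : B ^ b ≠ ∞ := ENNReal.rpow_ne_top_of_nonneg hb.le hgb
  have hM0 : M ≠ 0 := mul_ne_zero hAa0 hBb0
  have hMt : M ≠ ∞ := ENNReal.mul_ne_top hAat hBbt
  have hfA : ∀ x, f x / A ≤ 1 := fun x => ENNReal.div_le_of_le_mul (by simpa using le_iSup f x)
  have hgB : ∀ x, g x / B ≤ 1 := fun x => ENNReal.div_le_of_le_mul (by simpa using le_iSup g x)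
  have hdiv : ∀ x y : ℝ≥0∞, (x / A) ^ a * (y / B) ^ b = x ^ a * y ^ b / M := by
    intro x y
    rw [ENNReal.div_rpow_of_nonneg _ _ ha.le, ENNReal.div_rpow_of_nonneg _ _ hb.le, hM,
      div_eq_mul_inv, div_eq_mul_inv, div_eq_mul_inv,
      ENNReal.mul_inv (Or.inl hAa0) (Or.inl hAat)]
    ring
  have hsup : ∀ (k : ℝ → ℝ≥0∞) (C : ℝ≥0∞), C = ⨆ x, k x → C ≠ 0 → C ≠ ∞ →
      (∀ x, k x / C ≤ 1) → ∀ t < 1, ∃ x, t < (k x / C).toReal := by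
    intro k C hC hC0 hCt hk t ht
    by_contra! hcon
    have h0 : 0 ≤ t := ENNReal.toReal_nonneg.trans (hcon 0)
    have hle : C ≤ ENNReal.ofReal t * C := by
      conv_lhs => rw [hC]
      refine iSup_le fun x => ?_
      have h1 := ENNReal.ofReal_le_ofReal (hcon x)
      rw [ENNReal.ofReal_toReal (ne_top_of_le_ne_top ENNReal.one_ne_top (hk x))] at h1
      exact (ENNReal.div_le_iff hC0 hCt).1 h1
    have h2 : ENNReal.ofReal t * C < 1 * C := by
      refine ENNReal.mul_lt_mul_left hC0 hCt ?_
      simpa using ht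
    simp only [one_mul] at h2
    exact absurd hle (not_le.2 h2)
  have main := prekopa_leindler_real_normalized ha hb hab
    (f := fun x => (f x / A).toReal) (g := fun x => (g x / B).toReal)
    (h := fun x => (min (h x / M) 1).toReal)
    (hf.div_const A).ennreal_toReal (hg.div_const B).ennreal_toReal
    ((hh.div_const M).min measurable_const).ennreal_toReal
    (fun x => ENNReal.toReal_nonneg) (fun x => ENNReal.toReal_nonneg)
    (fun x => ENNReal.toReal_nonneg)
    (fun x => ENNReal.toReal_le_of_le_ofReal zero_le_one (by simpa using hfA x))
    (fun x => ENNReal.toReal_le_of_le_ofReal zero_le_one (by simpa using hgB x))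
    (hsup f A hA hA0 hfb hfA) (hsup g B hB hB0 hgb hgB)
    (fun x y => by
      rw [ENNReal.toReal_rpow, ENNReal.toReal_rpow, ← ENNReal.toReal_mul]
      refine ENNReal.toReal_mono (ne_top_of_le_ne_top ENNReal.one_ne_top (min_le_right _ _))
        (le_min ?_ ?_)
      · rw [hdiv]
        exact ENNReal.div_le_div_right (H x y) M
      · exact mul_le_one' (ENNReal.rpow_le_one (hfA x) ha.le) (ENNReal.rpow_le_one (hgB y) hb.le))
  have e : ∀ (k : ℝ → ℝ≥0∞) (C : ℝ≥0∞), Measurable k → (∀ x, k x / C ≤ 1) →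
      ∫⁻ x, ENNReal.ofReal (k x / C).toReal = (∫⁻ x, k x) / C := by
    intro k C hk hkC
    rw [div_eq_mul_inv, ← lintegral_mul_const _ hk]
    refine lintegral_congr fun x => ?_
    rw [ENNReal.ofReal_toReal (ne_top_of_le_ne_top ENNReal.one_ne_top (hkC x)), div_eq_mul_inv]
  rw [e f A hf hfA, e g B hg hgB] at main
  have h3 := (ENNReal.rpow_mul_rpow_le_add ha hb hab _ _).trans main
  rw [hdiv] at h3
  have h4 : ∫⁻ x, ENNReal.ofReal (min (h x / M) 1).toReal ≤ (∫⁻ x, h x) / M := by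
    rw [div_eq_mul_inv, ← lintegral_mul_const _ hh]
    refine lintegral_mono fun x => ?_
    exact ENNReal.ofReal_toReal_le.trans (min_le_left _ _)
  have h5 := h3.trans h4
  rwa [ENNReal.div_le_iff hM0 hMt, ENNReal.div_mul_cancel hM0 hMt] at h5

/-- The Prékopa–Leindler inequality, as a property of a measure on a real vector space. -/
def PrekopaLeindler {E : Type*} [AddCommGroup E] [Module ℝ E] [MeasurableSpace E]
    (μ : Measure E) : Prop :=
  ∀ ⦃a b : ℝ⦄, 0 < a → 0 < b → a + b = 1 → ∀ ⦃f g h : E → ℝ≥0∞⦄, Measurable f → Measurable g →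
    Measurable h → (∀ x y, f x ^ a * g y ^ b ≤ h (a • x + b • y)) →
    (∫⁻ x, f x ∂μ) ^ a * (∫⁻ x, g x ∂μ) ^ b ≤ ∫⁻ x, h x ∂μ

theorem PrekopaLeindler.real : PrekopaLeindler (volume : Measure ℝ) := by
  intro a b ha hb hab f g h hf hg hh H
  by_cases hf0 : ∫⁻ x, f x = 0
  · simp [hf0, ha]
  by_cases hg0 : ∫⁻ x, g x = 0
  · simp [hg0, hb]
  have trunc : ∀ k : ℝ → ℝ≥0∞, Measurable k →
      Filter.Tendsto (fun n : ℕ => ∫⁻ x, min (k x) n) Filter.atTop (𝓝 (∫⁻ x, k x)) := by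
    intro k hk
    refine lintegral_tendsto_of_tendsto_of_monotone
      (fun n => (hk.min measurable_const).aemeasurable) (Filter.Eventually.of_forall fun x m n hmn =>
        min_le_min_left _ (by exact_mod_cast hmn)) (Filter.Eventually.of_forall fun x => ?_)
    simpa using (tendsto_const_nhds (x := k x)).min ENNReal.tendsto_nat_nhds_top
  have hlim := ENNReal.Tendsto.mul ((trunc f hf).ennrpow_const a)
    (Or.inl (by simp [hf0, ha.not_gt])) ((trunc g hg).ennrpow_const b)
    (Or.inl (by simp [hg0, hb.not_gt]))
  refine le_of_tendsto' hlim fun n => ?_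
  have hb' : ∀ k : ℝ → ℝ≥0∞, ⨆ x, min (k x) n ≠ ∞ := fun k =>
    ne_top_of_le_ne_top (ENNReal.natCast_ne_top n) (iSup_le fun x => min_le_right _ _)
  refine prekopa_leindler_real_of_bounded ha hb hab (hf.min measurable_const)
    (hg.min measurable_const) hh (hb' f) (hb' g) fun x y => le_trans ?_ (H x y)
  gcongr <;> exact min_le_left _ _

theorem PrekopaLeindler.prod {E F : Type*} [AddCommGroup E] [Module ℝ E] [MeasurableSpace E]
    [AddCommGroup F] [Module ℝ F] [MeasurableSpace F] {μ : Measure E} {ν : Measure F} [SFinite μ]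
    [SFinite ν] (hμ : PrekopaLeindler μ) (hν : PrekopaLeindler ν) :
    PrekopaLeindler (μ.prod ν) := by
  intro a b ha hb hab f g h hf hg hh H
  rw [lintegral_prod _ hf.aemeasurable, lintegral_prod _ hg.aemeasurable,
    lintegral_prod _ hh.aemeasurable]
  refine hμ ha hb hab hf.lintegral_prod_right' hg.lintegral_prod_right' hh.lintegral_prod_right'
    fun x y => ?_
  exact hν ha hb hab (hf.comp measurable_prodMk_left) (hg.comp measurable_prodMk_left)
    (hh.comp measurable_prodMk_left) fun v w => H (x, v) (y, w)

theorem PrekopaLeindler.of_measurePreserving {E F : Type*} [AddCommGroup E] [Module ℝ E]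
    [MeasurableSpace E] [AddCommGroup F] [Module ℝ F] [MeasurableSpace F] {μ : Measure E}
    {ν : Measure F} (e : E →ₗ[ℝ] F) (he : MeasurePreserving e μ ν) (hμ : PrekopaLeindler μ) :
    PrekopaLeindler ν := by
  intro a b ha hb hab f g h hf hg hh H
  rw [← he.lintegral_comp hf, ← he.lintegral_comp hg, ← he.lintegral_comp hh]
  refine hμ ha hb hab (hf.comp he.measurable) (hg.comp he.measurable) (hh.comp he.measurable)
    fun x y => ?_
  simpa using H (e x) (e y)

theorem PrekopaLeindler.pi (n : ℕ) : PrekopaLeindler (volume : Measure (Fin n → ℝ)) := by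
  induction n with
  | zero =>
    intro a b ha hb hab f g h hf hg hh H
    have hv : (volume : Measure (Fin 0 → ℝ)) = Measure.dirac 0 := by
      rw [volume_pi, Measure.pi_of_empty]
      exact congrArg _ (Subsingleton.elim _ _)
    rw [hv, lintegral_dirac' _ hf, lintegral_dirac' _ hg, lintegral_dirac' _ hh]
    simpa using H 0 0
  | succ n ih =>
    refine (PrekopaLeindler.real.prod ih).of_measurePreserving
      (Fin.consLinearEquiv ℝ (fun _ : Fin (n + 1) => ℝ)).toLinearMap ?_
    have he : ⇑(Fin.consLinearEquiv ℝ (fun _ : Fin (n + 1) => ℝ)).toLinearMap =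
        (MeasurableEquiv.piFinSuccAbove (fun _ : Fin (n + 1) => ℝ) 0).symm := by
      ext x i
      simp [MeasurableEquiv.piFinSuccAbove]
    rw [he]
    exact (volume_preserving_piFinSuccAbove (fun _ : Fin (n + 1) => ℝ) 0).symm _

theorem PrekopaLeindler.euclideanSpace (n : ℕ) :
    PrekopaLeindler (volume : Measure (EuclideanSpace ℝ (Fin n))) :=
  (PrekopaLeindler.pi n).of_measurePreserving
    (WithLp.linearEquiv 2 ℝ (Fin n → ℝ)).symm.toLinearMap (PiLp.volume_preserving_toLp (Fin n))

/-- The multiplicative form of the Brunn–Minkowski inequality for compact sets. -/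
theorem volume_rpow_mul_rpow_le {n : ℕ} {a b : ℝ} (ha : 0 < a) (hb : 0 < b) (hab : a + b = 1)
    {A B : Set (EuclideanSpace ℝ (Fin n))} (hA : IsCompact A) (hB : IsCompact B) :
    volume A ^ a * volume B ^ b ≤ volume (a • A + b • B) := by
  have hC : IsCompact (a • A + b • B) := (hA.smul a).add (hB.smul b)
  have h := PrekopaLeindler.euclideanSpace n ha hb hab
    (measurable_one.indicator hA.measurableSet) (measurable_one.indicator hB.measurableSet)
    (measurable_one.indicator hC.measurableSet) fun x y => by
      by_cases hx : x ∈ A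
      · by_cases hy : y ∈ B
        · simp [hx, hy, Set.add_mem_add (Set.smul_mem_smul_set (a := a) hx)
            (Set.smul_mem_smul_set (a := b) hy)]
        · simp [hy, hb]
      · simp [hx, ha]
  simpa [lintegral_indicator_one, hA.measurableSet, hB.measurableSet, hC.measurableSet] using h

/-- The coordinates of Euclidean space given by a unit vector and its orthogonal complement. -/
def orthogonalCoordinates {m : ℕ} (u : Euc m) (hu : ‖u‖ = 1) :
    (ℝ × (ℝ ∙ u)ᗮ) ≃L[ℝ] Euc m :=
  LinearEquiv.toContinuousLinearEquiv
    (LinearEquiv.ofBijective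
      (((LinearMap.id : ℝ →ₗ[ℝ] ℝ).smulRight u).coprod (ℝ ∙ u)ᗮ.subtype) (by
      have huu : ⟪u, u⟫ = 1 := by rw [real_inner_self_eq_norm_sq, hu, one_pow]
      have horth : ∀ w : (ℝ ∙ u)ᗮ, ⟪u, (w : Euc m)⟫ = 0 := fun w =>
        Submodule.mem_orthogonal_singleton_iff_inner_right.1 w.2
      constructor
      · rw [← LinearMap.ker_eq_bot, LinearMap.ker_eq_bot']
        rintro ⟨s, w⟩ h
        have h' : s • u + (w : Euc m) = 0 := by simpa using h
        have hs : s = 0 := by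
          have := congrArg (fun z => ⟪u, z⟫) h'
          simpa only [inner_add_right, real_inner_smul_right, huu, horth, inner_zero_right,
            mul_one, add_zero] using this
        subst hs
        have hw : (w : Euc m) = 0 := by simpa using h'
        ext1
        · rfl
        · exact Subtype.ext hw
      · intro x
        refine ⟨(⟪u, x⟫, ⟨x - ⟪u, x⟫ • u, ?_⟩), by simp⟩
        rw [Submodule.mem_orthogonal_singleton_iff_inner_right, inner_sub_right, inner_smul_right,
          huu, mul_one, sub_self]))

theorem image_add_orthogonal_preimage {m : ℕ} (u : Euc m) (hu : ‖u‖ = 1) (s : ℝ)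
    (A : Set (Euc m)) :
    (fun w : (ℝ ∙ u)ᗮ => s • u + (w : Euc m)) '' {w | s • u + (w : Euc m) ∈ A} =
      A ∩ {x | ⟪x, u⟫ = s} := by
  have huu : ⟪u, u⟫ = 1 := by rw [real_inner_self_eq_norm_sq, hu, one_pow]
  ext x
  constructor
  · rintro ⟨w, hw, rfl⟩
    refine ⟨hw, ?_⟩
    have := Submodule.mem_orthogonal_singleton_iff_inner_left.1 w.2
    simp only [mem_ofPred_eq, inner_add_left, real_inner_smul_left, huu, this, mul_one, add_zero]
  · rintro ⟨hx, hxs : ⟪x, u⟫ = s⟩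
    refine ⟨⟨x - s • u, ?_⟩, by simpa using hx, by simp⟩
    rw [Submodule.mem_orthogonal_singleton_iff_inner_left, inner_sub_left, real_inner_smul_left,
      huu, hxs, mul_one, sub_self]

theorem isometry_smul_add_orthogonal {m : ℕ} (u : Euc m) (s : ℝ) :
    Isometry fun w : (ℝ ∙ u)ᗮ => s • u + (w : Euc m) :=
  (IsometryEquiv.addLeft (s • u)).isometry.comp isometry_subtype_coe

theorem finrank_orthogonal_cast {m : ℕ} (u : Euc m) (hu : ‖u‖ = 1) :
    (m : ℝ) - 1 = (Module.finrank ℝ (ℝ ∙ u)ᗮ : ℝ) := by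
  have hu0 : u ≠ 0 := by rintro rfl; simp at hu
  have h := Submodule.finrank_add_finrank_orthogonal (ℝ ∙ u)
  rw [finrank_span_singleton hu0, finrank_euclideanSpace_fin] at h
  have : (m : ℝ) = 1 + (Module.finrank ℝ (ℝ ∙ u)ᗮ : ℝ) := by exact_mod_cast h.symm
  linarith

/-- Fubini's theorem for slicing along a direction, with Hausdorff measure on the slices. -/
theorem exists_volume_eq_lintegral_slices {m : ℕ} (u : Euc m) (hu : ‖u‖ = 1) :
    ∃ c : ℝ≥0∞, c ≠ ∞ ∧ ∀ A : Set (Euc m), MeasurableSet A →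
      volume A = c * ∫⁻ s : ℝ, μH[(m : ℝ) - 1] (A ∩ {x | ⟪x, u⟫ = s}) := by
  set e := orthogonalCoordinates u hu
  set ν : Measure (Euc m) :=
    ((volume : Measure ℝ).prod (μH[Module.finrank ℝ (ℝ ∙ u)ᗮ] : Measure (ℝ ∙ u)ᗮ)).map e with hν
  have : ν.IsAddHaarMeasure := e.isAddHaarMeasure_map _
  refine ⟨Measure.addHaarScalarFactor volume ν, ENNReal.coe_ne_top, fun A hA => ?_⟩
  have hvol : (volume : Measure (Euc m)) = Measure.addHaarScalarFactor volume ν • ν :=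
    Measure.isAddLeftInvariant_eq_smul _ _
  conv_lhs => rw [hvol]
  rw [Measure.smul_apply, ENNReal.smul_def, smul_eq_mul]
  congr 1
  rw [hν, Measure.map_apply e.continuous.measurable hA,
    Measure.prod_apply (e.continuous.measurable hA)]
  refine lintegral_congr fun s => ?_
  rw [← image_add_orthogonal_preimage u hu s A,
    (isometry_smul_add_orthogonal u s).hausdorffMeasure_image
    (Or.inl (finrank_orthogonal_cast u hu ▸ Nat.cast_nonneg _)), finrank_orthogonal_cast u hu]
  rfl

theorem hausdorffMeasure_lt_top_of_subset_hyperplane {m : ℕ} (u : Euc m) (hu : ‖u‖ = 1) {s : ℝ}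
    {K : Set (Euc m)} (hK : IsCompact K) (hKs : K ⊆ {x | ⟪x, u⟫ = s}) :
    μH[(m : ℝ) - 1] K < ∞ := by
  rw [← inter_eq_left.2 hKs, ← image_add_orthogonal_preimage u hu s K,
    (isometry_smul_add_orthogonal u s).hausdorffMeasure_image
    (Or.inl (finrank_orthogonal_cast u hu ▸ Nat.cast_nonneg _)), finrank_orthogonal_cast u hu]
  have hcl : Topology.IsClosedEmbedding fun w : (ℝ ∙ u)ᗮ => s • u + (w : Euc m) :=
    (isometry_smul_add_orthogonal u s).isClosedEmbedding
  exact (hcl.isCompact_preimage hK).measure_lt_top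

open Classical in
/-- The constant relating slicewise Hausdorff measure to Lebesgue measure. -/
def sliceConst {m : ℕ} (u : Euc m) : ℝ≥0∞ :=
  if hu : ‖u‖ = 1 then (exists_volume_eq_lintegral_slices u hu).choose else 0

theorem sliceConst_ne_top {m : ℕ} (u : Euc m) : sliceConst u ≠ ∞ := by
  unfold sliceConst
  split_ifs with hu
  · exact (exists_volume_eq_lintegral_slices u hu).choose_spec.1
  · exact ENNReal.zero_ne_top

theorem volume_eq_lintegral_slices {m : ℕ} {u : Euc m} (hu : ‖u‖ = 1) {A : Set (Euc m)}
    (hA : MeasurableSet A) :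
    volume A = sliceConst u * ∫⁻ s : ℝ, μH[(m : ℝ) - 1] (A ∩ {x | ⟪x, u⟫ = s}) := by
  rw [sliceConst, dif_pos hu]
  exact (exists_volume_eq_lintegral_slices u hu).choose_spec.2 A hA

/-- The support function of a set. -/
def supportFun {m : ℕ} (K : Set (Euc m)) (u : Euc m) : ℝ := sSup ((fun x => ⟪x, u⟫) '' K)

theorem continuous_inner_const {m : ℕ} (u : Euc m) : Continuous fun x : Euc m => ⟪x, u⟫ := by
  fun_prop

theorem inner_le_supportFun {m : ℕ} {K : Set (Euc m)} (hK : IsCompact K) (u : Euc m) {x : Euc m}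
    (hx : x ∈ K) : ⟪x, u⟫ ≤ supportFun K u :=
  le_csSup (hK.image (continuous_inner_const u)).bddAbove (mem_image_of_mem _ hx)

theorem faceIn_eq_inter {m : ℕ} {K : Set (Euc m)} (hK : IsCompact K) (u : Euc m) :
    faceIn K u = K ∩ {x | ⟪x, u⟫ = supportFun K u} := by
  ext x
  constructor
  · rintro ⟨hx, h⟩
    refine ⟨hx, le_antisymm (inner_le_supportFun hK u hx) (csSup_le ⟨_, mem_image_of_mem _ hx⟩ ?_)⟩
    rintro _ ⟨y, hy, rfl⟩
    exact h y hy
  · rintro ⟨hx, h : ⟪x, u⟫ = _⟩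
    exact ⟨hx, fun y hy => h ▸ inner_le_supportFun hK u hy⟩

theorem isCompact_faceIn {m : ℕ} {K : Set (Euc m)} (hK : IsCompact K) (u : Euc m) :
    IsCompact (faceIn K u) := by
  rw [faceIn_eq_inter hK u]
  exact hK.inter_right (isClosed_eq (continuous_inner_const u) continuous_const)

theorem supportFun_pos {m : ℕ} {K : Set (Euc m)} (hK : IsCompact K) (h0 : 0 ∈ interior K)
    {u : Euc m} (hu : u ≠ 0) : 0 < supportFun K u := by
  have hcont : Filter.Tendsto (fun r : ℝ => r • u) (𝓝[>] 0) (𝓝 0) := by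
    have : Continuous fun r : ℝ => r • u := by fun_prop
    simpa using (this.tendsto 0).mono_left nhdsWithin_le_nhds
  obtain ⟨r, hr, hr0⟩ := ((hcont.eventually (mem_interior_iff_mem_nhds.1 h0)).and
    self_mem_nhdsWithin).exists
  have := inner_le_supportFun hK u hr
  rw [real_inner_smul_left] at this
  have hr0 : 0 < r := hr0
  have : 0 < ⟪u, u⟫ := real_inner_self_pos.2 hu
  nlinarith [mul_pos hr0 this]

/-- The cone with apex at the origin over the face of `K` in direction `u`. -/
def faceCone {m : ℕ} (K : Set (Euc m)) (u : Euc m) : Set (Euc m) :=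
  (fun p : ℝ × Euc m => p.1 • p.2) '' (Icc 0 1 ×ˢ faceIn K u)

theorem isCompact_faceCone {m : ℕ} {K : Set (Euc m)} (hK : IsCompact K) (u : Euc m) :
    IsCompact (faceCone K u) :=
  (isCompact_Icc.prod (isCompact_faceIn hK u)).image (by fun_prop)

theorem faceCone_subset {m : ℕ} {K : Set (Euc m)} (hK : Convex ℝ K) (h0 : 0 ∈ K) (u : Euc m) :
    faceCone K u ⊆ K := by
  rintro _ ⟨⟨r, x⟩, ⟨hr, hx⟩, rfl⟩
  exact hK.smul_mem_of_zero_mem h0 hx.1 hr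

theorem aedisjoint_faceCone {m : ℕ} {K : Set (Euc m)} (hK : IsCompact K) (h0 : 0 ∈ interior K)
    {u v : Euc m} (hu : ‖u‖ = 1) (hv : ‖v‖ = 1) (huv : u ≠ v) :
    AEDisjoint volume (faceCone K u) (faceCone K v) := by
  have hu0 : u ≠ 0 := by rintro rfl; simp at hu
  have hv0 : v ≠ 0 := by rintro rfl; simp at hv
  have pu := supportFun_pos hK h0 hu0
  have pv := supportFun_pos hK h0 hv0
  set w := supportFun K v • u - supportFun K u • v with hw
  have hw0 : w ≠ 0 := by
    intro h
    have h1 : supportFun K v • u = supportFun K u • v := sub_eq_zero.1 h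
    have h2 := congrArg norm h1
    rw [norm_smul, norm_smul, hu, hv, mul_one, mul_one, Real.norm_of_nonneg pv.le,
      Real.norm_of_nonneg pu.le] at h2
    rw [h2] at h1
    exact huv (smul_right_injective _ pu.ne' h1)
  have hle : ∀ {u v : Euc m} {r r' : ℝ} {x y : Euc m}, 0 < supportFun K v → 0 ≤ r →
      x ∈ faceIn K u → y ∈ faceIn K v → r • x = r' • y → r' ≤ r := by
    intro u v r r' x y pv hr hx hy hxy
    rw [faceIn_eq_inter hK] at hx hy
    have h1 := congrArg (fun z => ⟪z, v⟫) hxy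
    simp only [real_inner_smul_left] at h1
    have h2 : ⟪y, v⟫ = supportFun K v := hy.2
    have h3 := mul_le_mul_of_nonneg_left (inner_le_supportFun hK v hx.1) hr
    rw [h1, h2] at h3
    exact le_of_mul_le_mul_right h3 pv
  refine measure_mono_null (t := ((ℝ ∙ w)ᗮ : Submodule ℝ (Euc m))) ?_
    (Measure.addHaar_submodule _ _ ?_)
  · rintro z ⟨⟨⟨r, x⟩, ⟨hr, hx⟩, rfl⟩, ⟨⟨r', y⟩, ⟨hr', hy⟩, hxy⟩⟩
    have hrr : r' = r := le_antisymm (hle pv hr.1 hx hy hxy.symm) (hle pu hr'.1 hy hx hxy)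
    rw [SetLike.mem_coe, Submodule.mem_orthogonal_singleton_iff_inner_left]
    have hxu : ⟪x, u⟫ = supportFun K u := ((faceIn_eq_inter hK u).subset hx).2
    have hyv : ⟪y, v⟫ = supportFun K v := ((faceIn_eq_inter hK v).subset hy).2
    have h1 := congrArg (fun z => ⟪z, v⟫) hxy
    simp only [real_inner_smul_left, hyv] at h1
    simp only [hw, inner_sub_right, real_inner_smul_left, real_inner_smul_right, hxu]
    linear_combination supportFun K u * h1 - supportFun K u * supportFun K v * hrr
  · intro htop
    rw [Submodule.orthogonal_eq_top_iff, Submodule.span_singleton_eq_bot] at htop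
    exact hw0 htop

theorem lintegral_Ioc_div_pow {h : ℝ} (hh : 0 < h) (n : ℕ) :
    ∫⁻ s in Ioc 0 h, ENNReal.ofReal ((s / h) ^ n) = ENNReal.ofReal (h / (n + 1)) := by
  have hintegrable : IntervalIntegrable (fun s : ℝ => (s / h) ^ n) volume 0 h :=
    (by fun_prop : Continuous fun s : ℝ => (s / h) ^ n).intervalIntegrable _ _
  rw [← ofReal_integral_eq_lintegral_ofReal
    ((intervalIntegrable_iff_integrableOn_Ioc_of_le hh.le).1 hintegrable)
    ((ae_restrict_iff' measurableSet_Ioc).2 (Filter.Eventually.of_forall fun s hs => by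
      have : 0 < s := hs.1
      positivity)), ← intervalIntegral.integral_of_le hh.le]
  congr 1
  rw [intervalIntegral.integral_comp_div (fun s => s ^ n) hh.ne', integral_pow]
  simp [hh.ne']
  ring

theorem volume_faceCone_ge {m : ℕ} (hm : 1 ≤ m) {K : Set (Euc m)} (hK : IsCompact K)
    (h0 : 0 ∈ interior K) {u : Euc m} (hu : ‖u‖ = 1) :
    sliceConst u * ENNReal.ofReal (supportFun K u) * faceArea K u ≤ m * volume (faceCone K u) := by
  have hu0 : u ≠ 0 := by rintro rfl; simp at hu
  have pu := supportFun_pos hK h0 hu0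
  obtain ⟨n, rfl⟩ : ∃ n, m = n + 1 := ⟨m - 1, by omega⟩
  have hd : ((n + 1 : ℕ) : ℝ) - 1 = n := by push_cast; ring
  have hslice : ∀ s ∈ Ioc 0 (supportFun K u),
      ENNReal.ofReal ((s / supportFun K u) ^ n) * faceArea K u ≤
        μH[((n + 1 : ℕ) : ℝ) - 1] (faceCone K u ∩ {x | ⟪x, u⟫ = s}) := by
    intro s hs
    have hs0 : 0 < s / supportFun K u := div_pos hs.1 pu
    have hsm := Measure.hausdorffMeasure_smul₀ (d := ((n + 1 : ℕ) : ℝ) - 1)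
      (by rw [hd]; positivity) hs0.ne' (faceIn K u)
    calc ENNReal.ofReal ((s / supportFun K u) ^ n) * faceArea K u
        = μH[((n + 1 : ℕ) : ℝ) - 1] ((s / supportFun K u) • faceIn K u) := by
          rw [hsm, hd, NNReal.rpow_natCast, faceArea, hd, ENNReal.smul_def, smul_eq_mul,
            ← Real.toNNReal_eq_nnnorm_of_nonneg hs0.le, ENNReal.ofReal_pow hs0.le, ENNReal.ofReal,
            ENNReal.coe_pow]
      _ ≤ _ := by
          refine measure_mono ?_
          rintro _ ⟨x, hx, rfl⟩
          refine ⟨⟨(s / supportFun K u, x), ⟨⟨hs0.le, (div_le_one pu).2 hs.2⟩, hx⟩, rfl⟩, ?_⟩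
          have hxu : ⟪x, u⟫ = supportFun K u := ((faceIn_eq_inter hK u).subset hx).2
          change ⟪(s / supportFun K u) • x, u⟫ = s
          rw [real_inner_smul_left, hxu, div_mul_cancel₀ _ pu.ne']
  rw [volume_eq_lintegral_slices hu (isCompact_faceCone hK u).measurableSet]
  have hslices : ENNReal.ofReal (supportFun K u / (n + 1)) * faceArea K u ≤
      ∫⁻ s : ℝ, μH[((n + 1 : ℕ) : ℝ) - 1] (faceCone K u ∩ {x | ⟪x, u⟫ = s}) := by
    rw [← lintegral_Ioc_div_pow pu n, ← lintegral_mul_const _ (by fun_prop)]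
    refine le_trans ?_ (setLIntegral_le_lintegral (Ioc 0 (supportFun K u)) _)
    exact setLIntegral_mono' measurableSet_Ioc hslice
  calc sliceConst u * ENNReal.ofReal (supportFun K u) * faceArea K u
      = sliceConst u * (ENNReal.ofReal ((n + 1 : ℕ) * (supportFun K u / (n + 1)))
          * faceArea K u) := by
        rw [mul_assoc]
        congr 3
        push_cast
        field_simp
    _ = (n + 1 : ℕ) * (sliceConst u *
          (ENNReal.ofReal (supportFun K u / (n + 1)) * faceArea K u)) := by
        rw [ENNReal.ofReal_mul (by positivity), ENNReal.ofReal_natCast]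
        ring
    _ ≤ _ := by gcongr

/-- The volume of a convex body dominates the volumes of the cones over finitely many faces. -/
theorem sum_faceArea_le_volume {m : ℕ} (hm : 1 ≤ m) {K : Set (Euc m)} (hK : IsCompact K)
    (hconv : Convex ℝ K) (h0 : 0 ∈ interior K) (U : Finset (Euc m)) (hU : ∀ u ∈ U, ‖u‖ = 1) :
    ∑ u ∈ U, sliceConst u * ENNReal.ofReal (supportFun K u) * faceArea K u ≤ m * volume K :=
  calc ∑ u ∈ U, sliceConst u * ENNReal.ofReal (supportFun K u) * faceArea K u
      ≤ ∑ u ∈ U, m * volume (faceCone K u) :=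
        Finset.sum_le_sum fun u hu => volume_faceCone_ge hm hK h0 (hU u hu)
    _ = m * volume (⋃ u ∈ U, faceCone K u) := by
        rw [← Finset.mul_sum, measure_biUnion_finset₀
          (fun u hu v hv huv => aedisjoint_faceCone hK h0 (hU u hu) (hU v hv) huv)
          fun u _ => (isCompact_faceCone hK u).measurableSet.nullMeasurableSet]
    _ ≤ m * volume K := by
        gcongr
        exact iUnion₂_subset fun u _ => faceCone_subset hconv (interior_subset h0) u

/-- The part of `K` beyond the hyperplane `⟪x, u⟫ = h`, projected orthogonally to it. -/
def capProjection {m : ℕ} (K : Set (Euc m)) (u : Euc m) (h : ℝ) : Set (Euc m) :=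
  (fun x => x + (h - ⟪x, u⟫) • u) '' (K ∩ {x | h ≤ ⟪x, u⟫})

theorem isCompact_capProjection {m : ℕ} {K : Set (Euc m)} (hK : IsCompact K) (u : Euc m) (h : ℝ) :
    IsCompact (capProjection K u h) :=
  (hK.inter_right (isClosed_le continuous_const (continuous_inner_const u))).image (by fun_prop)

theorem capProjection_subset {m : ℕ} (K : Set (Euc m)) {u : Euc m} (hu : ‖u‖ = 1) (h : ℝ) :
    capProjection K u h ⊆ {x | ⟪x, u⟫ = h} := by
  rintro _ ⟨x, -, rfl⟩
  have huu : ⟪u, u⟫ = 1 := by rw [real_inner_self_eq_norm_sq, hu, one_pow]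
  change ⟪x + (h - ⟪x, u⟫) • u, u⟫ = h
  rw [inner_add_left, real_inner_smul_left, huu]
  ring

theorem volume_cap_le {m : ℕ} {K : Set (Euc m)} (hK : IsCompact K) {u : Euc m} (hu : ‖u‖ = 1)
    (h r : ℝ) (hr : ∀ x ∈ K, ⟪x, u⟫ ≤ h + r) :
    volume (K ∩ {x | h < ⟪x, u⟫}) ≤
      sliceConst u * ENNReal.ofReal r * μH[(m : ℝ) - 1] (capProjection K u h) := by
  rw [volume_eq_lintegral_slices hu (hK.measurableSet.inter
    (measurableSet_lt measurable_const (continuous_inner_const u).measurable)), mul_assoc]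
  gcongr
  have hle : ∀ s : ℝ, μH[(m : ℝ) - 1] (K ∩ {x | h < ⟪x, u⟫} ∩ {x | ⟪x, u⟫ = s}) ≤
      (Ioc h (h + r)).indicator (fun _ => μH[(m : ℝ) - 1] (capProjection K u h)) s := by
    intro s
    by_cases hs : s ∈ Ioc h (h + r)
    · rw [indicator_of_mem hs,
        ← (IsometryEquiv.addRight ((h - s) • u)).hausdorffMeasure_image]
      refine measure_mono ?_
      rintro _ ⟨x, ⟨⟨hx, hxh : h < ⟪x, u⟫⟩, hxs : ⟪x, u⟫ = s⟩, rfl⟩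
      exact ⟨x, ⟨hx, hxh.le⟩, by simp [hxs]⟩
    · rw [indicator_of_notMem hs, nonpos_iff_eq_zero]
      convert measure_empty (μ := μH[(m : ℝ) - 1])
      refine eq_empty_of_forall_notMem ?_
      rintro x ⟨⟨hx, hxh : h < ⟪x, u⟫⟩, hxs : ⟪x, u⟫ = s⟩
      exact hs ⟨hxs ▸ hxh, hxs ▸ hr x hx⟩
  refine (lintegral_mono hle).trans ?_
  rw [lintegral_indicator_const measurableSet_Ioc, Real.volume_Ioc, add_sub_cancel_left, mul_comm]

theorem volume_add_smul_le_s8 {m : ℕ} {P Q : Set (Euc m)} (hP : IsCompact P) (hQ : IsCompact Q)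
    (U : Finset (Euc m)) (hU : ∀ u ∈ U, ‖u‖ = 1)
    (hQU : ∀ x, (∀ u ∈ U, ⟪x, u⟫ ≤ supportFun Q u) → x ∈ Q) {t : ℝ} (ht : 0 ≤ t) :
    volume (Q + t • P) ≤ volume Q + ∑ u ∈ U, sliceConst u * ENNReal.ofReal (t * supportFun P u) *
      μH[(m : ℝ) - 1] (capProjection (Q + t • P) u (supportFun Q u)) := by
  have hcover : Q + t • P ⊆ Q ∪ ⋃ u ∈ U, (Q + t • P) ∩ {x | supportFun Q u < ⟪x, u⟫} := by
    intro x hx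
    by_cases hxQ : x ∈ Q
    · exact Or.inl hxQ
    · have : ∃ u ∈ U, supportFun Q u < ⟪x, u⟫ := by
        by_contra! hcon
        exact hxQ (hQU x hcon)
      obtain ⟨u, hu, hux⟩ := this
      exact Or.inr (mem_iUnion₂.2 ⟨u, hu, hx, hux⟩)
  refine (measure_mono hcover).trans ((measure_union_le _ _).trans ?_)
  gcongr
  refine (measure_biUnion_finset_le _ _).trans (Finset.sum_le_sum fun u hu => ?_)
  refine volume_cap_le (hQ.add (hP.smul t)) (hU u hu) _ _ ?_
  rintro _ ⟨q, hq, _, ⟨p, hp, rfl⟩, rfl⟩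
  change ⟪q + t • p, u⟫ ≤ _
  rw [inner_add_left, real_inner_smul_left]
  exact add_le_add (inner_le_supportFun hQ u hq)
    (mul_le_mul_of_nonneg_left (inner_le_supportFun hP u hp) ht)

theorem exists_tendsto_capProjection_le_faceArea {m : ℕ} {P Q : Set (Euc m)} (hP : IsCompact P)
    (hPc : Convex ℝ P) (h0 : 0 ∈ P) (hQ : IsCompact Q) {u : Euc m} (hu : ‖u‖ = 1) :
    ∃ L ≤ faceArea Q u, Filter.Tendsto (fun n : ℕ => μH[(m : ℝ) - 1]
      (capProjection (Q + (1 / ((n : ℝ) + 1)) • P) u (supportFun Q u))) Filter.atTop (𝓝 L) := by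
  set G : ℕ → Set (Euc m) := fun n =>
    capProjection (Q + (1 / ((n : ℝ) + 1)) • P) u (supportFun Q u) with hG
  have hGc : ∀ n, IsCompact (G n) := fun n => isCompact_capProjection (hQ.add (hP.smul _)) u _
  have hanti : Antitone G := by
    intro a b hab
    refine image_mono (inter_subset_inter_left _ (add_subset_add_left ?_))
    rintro _ ⟨p, hp, rfl⟩
    have hab' : ((a : ℝ) + 1) / (b + 1) ≤ 1 := by
      rw [div_le_one (by positivity)]
      gcongr
    refine ⟨(((a : ℝ) + 1) / (b + 1)) • p, hPc.smul_mem_of_zero_mem h0 hp ⟨by positivity, hab'⟩, ?_⟩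
    simp only [smul_smul]
    congr 1
    field_simp
  refine ⟨_, ?_, tendsto_measure_iInter_atTop (fun n => (hGc n).measurableSet.nullMeasurableSet)
    hanti ⟨0, (hausdorffMeasure_lt_top_of_subset_hyperplane u hu (hGc 0)
      (capProjection_subset _ hu _)).ne⟩⟩
  refine measure_mono fun y hy => ?_
  rw [mem_iInter] at hy
  choose x hx hxy using hy
  choose q hq z hz hqz using fun n => (hx n).1
  choose p hp hpz using hz
  obtain ⟨q₀, hq₀, φ, hφ, hlim⟩ := hQ.tendsto_subseq hq
  have hz0 : Filter.Tendsto z Filter.atTop (𝓝 0) := by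
    obtain ⟨C, hC⟩ := hP.isBounded.exists_norm_le
    refine squeeze_zero_norm (a := fun n : ℕ => 1 / ((n : ℝ) + 1) * C) (fun n => ?_) ?_
    · rw [← hpz n]
      change ‖(1 / ((n : ℝ) + 1)) • p n‖ ≤ _
      rw [norm_smul, Real.norm_of_nonneg (by positivity)]
      gcongr
      exact hC _ (hp n)
    · simpa using tendsto_one_div_add_atTop_nhds_zero_nat.mul_const C
  have hxlim : Filter.Tendsto (x ∘ φ) Filter.atTop (𝓝 q₀) := by
    have h1 := hlim.add (hz0.comp hφ.tendsto_atTop)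
    rw [add_zero] at h1
    exact h1.congr fun n => hqz (φ n)
  have hge : supportFun Q u ≤ ⟪q₀, u⟫ :=
    ge_of_tendsto' (((continuous_inner_const u).tendsto q₀).comp hxlim) fun n => (hx (φ n)).2
  have heq : ⟪q₀, u⟫ = supportFun Q u := le_antisymm (inner_le_supportFun hQ u hq₀) hge
  have hcont : Continuous fun x : Euc m => x + (supportFun Q u - ⟪x, u⟫) • u := by fun_prop
  have hy : y = q₀ := by
    have h1 := (hcont.tendsto q₀).comp hxlim
    rw [heq, sub_self, zero_smul, add_zero] at h1
    exact tendsto_nhds_unique (tendsto_const_nhds.congr fun n => (hxy (φ n)).symm) h1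
  rw [faceIn_eq_inter hQ, hy]
  exact ⟨hq₀, heq⟩

/-- A polyhedron given by finitely many inequalities has finitely many extreme points. -/
theorem finite_extremePoints_polar {m : ℕ} (s : Finset (Euc m)) :
    (Set.extremePoints ℝ {y : Euc m | ∀ v ∈ s, ⟪v, y⟫ ≤ 1}).Finite := by
  classical
  refine Set.Finite.of_finite_image (f := fun y => s.filter fun v => ⟪v, y⟫ = 1)
    ((s.powerset.finite_toSet).subset ?_) ?_
  · rintro _ ⟨y, -, rfl⟩
    exact Finset.mem_coe.2 (Finset.mem_powerset.2 (Finset.filter_subset _ _))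
  · intro y hy y' hy' hyy
    have hmem : ∀ v ∈ s, ∀ᶠ ε : ℝ in 𝓝 0, ⟪v, y + ε • (y' - y)⟫ ≤ 1 := by
      intro v hv
      by_cases h1 : ⟪v, y⟫ = 1
      · have h2 : ⟪v, y'⟫ = 1 := by
          have : v ∈ s.filter fun v => ⟪v, y'⟫ = 1 :=
            (Finset.ext_iff.1 hyy v).1 (Finset.mem_filter.2 ⟨hv, h1⟩)
          exact (Finset.mem_filter.1 this).2
        refine Filter.Eventually.of_forall fun ε => ?_
        rw [inner_add_right, real_inner_smul_right, inner_sub_right, h1, h2]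
        simp
      · have hlt : ⟪v, y⟫ < 1 := lt_of_le_of_ne (hy.1 v hv) h1
        have hc : Continuous fun ε : ℝ => ⟪v, y + ε • (y' - y)⟫ := by fun_prop
        have h3 := (hc.tendsto 0).eventually_lt_const (u := 1) (by simpa using hlt)
        exact h3.mono fun ε hε => hε.le
    have hall : ∀ᶠ ε : ℝ in 𝓝 0, ∀ v ∈ s, ⟪v, y + ε • (y' - y)⟫ ≤ 1 :=
      (Finset.eventually_all s).2 hmem
    have hneg : ∀ᶠ ε : ℝ in 𝓝 0, ∀ v ∈ s, ⟪v, y + (-ε) • (y' - y)⟫ ≤ 1 := by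
      have : Filter.Tendsto (fun ε : ℝ => -ε) (𝓝 0) (𝓝 0) := by
        simpa using (continuous_neg (G := ℝ)).tendsto 0
      exact this.eventually hall
    obtain ⟨ε, ⟨h1, h2⟩, hε⟩ := (((hall.and hneg).filter_mono nhdsWithin_le_nhds).and
      (self_mem_nhdsWithin (s := Ioi (0 : ℝ)))).exists
    have hε : 0 < ε := hε
    have hseg : y ∈ openSegment ℝ (y + ε • (y' - y)) (y + (-ε) • (y' - y)) := by
      refine ⟨1 / 2, 1 / 2, by norm_num, by norm_num, by norm_num, ?_⟩
      module
    have := hy.2 h1 h2 hseg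
    have h4 : ε • (y' - y) = 0 := by simpa using this
    rcases smul_eq_zero.1 h4 with h5 | h5
    · exact absurd h5 hε.ne'
    · exact (sub_eq_zero.1 h5).symm

/-- A polytope containing the origin in its interior is cut out by finitely many of its supporting
half-spaces. -/
theorem IsPolytope.exists_finset_supportFun {m : ℕ} {Q : Set (Euc m)} (hQ : IsPolytope Q)
    (hc : IsCompact Q) (h0 : 0 ∈ interior Q) :
    ∃ U : Finset (Euc m), (∀ u ∈ U, ‖u‖ = 1) ∧
      ∀ x, (∀ u ∈ U, ⟪x, u⟫ ≤ supportFun Q u) → x ∈ Q := by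
  classical
  obtain ⟨s, rfl⟩ := hQ
  set R : Set (Euc m) := {y | ∀ v ∈ s, ⟪v, y⟫ ≤ 1} with hR
  have hRQ : ∀ y ∈ R, ∀ x ∈ convexHull ℝ (s : Set (Euc m)), ⟪x, y⟫ ≤ 1 := by
    intro y hy
    have : Convex ℝ {x : Euc m | ⟪x, y⟫ ≤ 1} :=
      convex_halfSpace_le ⟨fun a b => inner_add_left a b y, fun r a => real_inner_smul_left a y r⟩ 1
    exact fun x hx => convexHull_min (t := {x : Euc m | ⟪x, y⟫ ≤ 1}) (fun v hv => hy v hv) this hx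
  have hRclosed : IsClosed R := by
    have : R = ⋂ v ∈ s, {y | ⟪v, y⟫ ≤ 1} := by ext y; simp [hR]
    rw [this]
    exact isClosed_biInter fun v _ => isClosed_le (by fun_prop) continuous_const
  have hRconv : Convex ℝ R := by
    intro y hy z hz a b ha hb hab v hv
    rw [inner_add_right, real_inner_smul_right, real_inner_smul_right]
    calc a * ⟪v, y⟫ + b * ⟪v, z⟫ ≤ a * 1 + b * 1 := by
          gcongr
          · exact hy v hv
          · exact hz v hv
      _ = 1 := by linarith
  have hRcompact : IsCompact R := by
    obtain ⟨r, hr, hball⟩ := Metric.isOpen_iff.1 isOpen_interior 0 h0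
    refine Metric.isCompact_of_isClosed_isBounded hRclosed
      (isBounded_iff_forall_norm_le.2 ⟨2 / r, fun y hy => ?_⟩)
    by_cases hy0 : y = 0
    · simp only [hy0, norm_zero]; positivity
    have hny : 0 < ‖y‖ := norm_pos_iff.2 hy0
    have hmem : (r / 2 / ‖y‖) • y ∈ convexHull ℝ (s : Set (Euc m)) := by
      refine interior_subset (hball ?_)
      rw [mem_ball_zero_iff, norm_smul, Real.norm_of_nonneg (by positivity),
        div_mul_cancel₀ _ hny.ne']
      linarith
    have := hRQ y hy _ hmem
    rw [real_inner_smul_left, real_inner_self_eq_norm_sq] at this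
    rw [le_div_iff₀ hr]
    have e : r / 2 / ‖y‖ * ‖y‖ ^ 2 = r / 2 * ‖y‖ := by field_simp
    rw [e] at this
    linarith
  have hfin := finite_extremePoints_polar s
  refine ⟨(hfin.toFinset.filter (· ≠ 0)).image fun y => ‖y‖⁻¹ • y, ?_, ?_⟩
  · intro u hu
    obtain ⟨y, hy, rfl⟩ := Finset.mem_image.1 hu
    have hy0 : y ≠ 0 := (Finset.mem_filter.1 hy).2
    exact norm_smul_inv_norm (𝕜 := ℝ) hy0
  · intro x hx
    by_contra hxQ
    have hext : ∀ y ∈ Set.extremePoints ℝ R, ⟪x, y⟫ ≤ 1 := by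
      intro y hy
      by_cases hy0 : y = 0
      · simp [hy0]
      have hny : 0 < ‖y‖ := norm_pos_iff.2 hy0
      have h1 := hx (‖y‖⁻¹ • y) (Finset.mem_image.2
        ⟨y, Finset.mem_filter.2 ⟨hfin.mem_toFinset.2 hy, hy0⟩, rfl⟩)
      have h2 : supportFun (convexHull ℝ (s : Set (Euc m))) (‖y‖⁻¹ • y) ≤ ‖y‖⁻¹ * 1 := by
        refine csSup_le ⟨_, mem_image_of_mem _ (interior_subset h0)⟩ ?_
        rintro _ ⟨z, hz, rfl⟩
        change ⟪z, ‖y‖⁻¹ • y⟫ ≤ _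
        rw [real_inner_smul_right]
        gcongr
        exact hRQ y hy.1 z hz
      rw [real_inner_smul_right] at h1
      exact le_of_mul_le_mul_left (h1.trans h2) (inv_pos.2 hny)
    have hpolar : ∀ y ∈ R, ⟪x, y⟫ ≤ 1 := by
      intro y hy
      rw [← closure_convexHull_extremePoints hRcompact hRconv] at hy
      have hcl : IsClosed {y : Euc m | ⟪x, y⟫ ≤ 1} := isClosed_le (by fun_prop) continuous_const
      have hcv : Convex ℝ {y : Euc m | ⟪x, y⟫ ≤ 1} :=
        convex_halfSpace_le ⟨fun a b => inner_add_right x a b,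
          fun r a => real_inner_smul_right x a r⟩ 1
      exact closure_minimal (convexHull_min hext hcv) hcl hy
    obtain ⟨f, a, hfa, hax⟩ := geometric_hahn_banach_closed_point (convex_convexHull ℝ _)
      hc.isClosed hxQ
    have ha : 0 < a := by simpa using hfa 0 (interior_subset h0)
    set y := (InnerProductSpace.toDual ℝ (Euc m)).symm f with hy
    have hfy : ∀ z, ⟪z, y⟫ = f z := fun z => by
      rw [real_inner_comm, hy, InnerProductSpace.toDual_symm_apply]
    have h1 := hpolar (a⁻¹ • y) fun v hv => by
      rw [real_inner_smul_right, hfy, inv_mul_le_iff₀ ha, mul_one]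
      exact (hfa v (subset_convexHull ℝ _ hv)).le
    rw [real_inner_smul_right, hfy, inv_mul_le_iff₀ ha, mul_one] at h1
    exact absurd hax (not_lt.2 h1)

theorem ofReal_mul_volume_le_volume_add_smul {m : ℕ} {A B : Set (Euc m)} (hA : IsCompact A)
    (hB : IsCompact B) (hAB : volume B = volume A) {t : ℝ} (ht : 0 < t) :
    ENNReal.ofReal (1 + m * t) * volume A ≤ volume (A + t • B) := by
  have ht1 : (0 : ℝ) < 1 + t := by linarith
  have hsum : 1 / (1 + t) + t / (1 + t) = 1 := by field_simp
  have hbm := volume_rpow_mul_rpow_le (div_pos one_pos ht1) (div_pos ht ht1) hsum hA hB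
  rw [hAB, ← ENNReal.rpow_add_of_nonneg _ _ (div_pos one_pos ht1).le (div_pos ht ht1).le, hsum,
    ENNReal.rpow_one] at hbm
  have hset : A + t • B = (1 + t) • ((1 / (1 + t)) • A + (t / (1 + t)) • B) := by
    rw [smul_add, smul_smul, smul_smul, mul_div_cancel₀ _ ht1.ne', mul_div_cancel₀ _ ht1.ne',
      one_smul]
  rw [hset, Measure.addHaar_smul_of_nonneg _ ht1.le, finrank_euclideanSpace_fin]
  gcongr
  exact one_add_mul_le_pow (by linarith) m

theorem volume_le_of_faceArea_le {m : ℕ} (hm : 2 ≤ m) {P Q : Set (Euc m)} (hP : IsCompact P)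
    (hPc : Convex ℝ P) (hP0 : 0 ∈ interior P) (hQ : IsCompact Q) (hQp : IsPolytope Q)
    (hQ0 : 0 ∈ interior Q) (hface : ∀ u, ‖u‖ = 1 → faceArea Q u ≤ faceArea P u) :
    volume Q ≤ volume P := by
  have hm0 : (m : ℝ) ≠ 0 := by positivity
  obtain ⟨U, hU, hQU⟩ := hQp.exists_finset_supportFun hQ hQ0
  have hpos : ∀ K : Set (Euc m), 0 ∈ interior K → volume K ≠ 0 := fun K hK =>
    (Measure.measure_pos_of_nonempty_interior volume ⟨0, hK⟩).ne'
  have hvP := (ENNReal.toReal_pos (hpos P hP0) hP.measure_ne_top)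
  have hvQ := (ENNReal.toReal_pos (hpos Q hQ0) hQ.measure_ne_top)
  set ρ : ℝ := ((volume Q).toReal / (volume P).toReal) ^ (1 / (m : ℝ)) with hρ
  have hρ0 : 0 < ρ := by positivity
  have hρm : ρ ^ m = (volume Q).toReal / (volume P).toReal := by
    rw [hρ, ← Real.rpow_natCast, ← Real.rpow_mul (by positivity), one_div_mul_cancel hm0,
      Real.rpow_one]
  have hvol : volume (ρ • P) = volume Q := by
    rw [Measure.addHaar_smul_of_nonneg _ hρ0.le, finrank_euclideanSpace_fin, hρm,
      ← ENNReal.ofReal_toReal hP.measure_ne_top, ← ENNReal.ofReal_mul (by positivity),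
      ENNReal.toReal_ofReal hvP.le, div_mul_cancel₀ _ hvP.ne',
      ENNReal.ofReal_toReal hQ.measure_ne_top]
  choose! L hL hLlim using fun u (hu : u ∈ U) =>
    exists_tendsto_capProjection_le_faceArea hP hPc (interior_subset hP0) hQ (hU u hu)
  have hstep : ∀ n : ℕ, ENNReal.ofReal (m / ρ) * volume Q ≤
      ∑ u ∈ U, sliceConst u * ENNReal.ofReal (supportFun P u) * μH[(m : ℝ) - 1]
        (capProjection (Q + (1 / ((n : ℝ) + 1)) • P) u (supportFun Q u)) := by
    intro n
    set τ : ℝ := 1 / ((n : ℝ) + 1) with hτ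
    have hτ0 : 0 < τ := by positivity
    have h1 := ofReal_mul_volume_le_volume_add_smul hQ (hP.smul ρ) hvol (div_pos hτ0 hρ0)
    rw [smul_smul, div_mul_cancel₀ _ hρ0.ne'] at h1
    have h2 := h1.trans (volume_add_smul_le_s8 hP hQ U hU hQU hτ0.le)
    rw [ENNReal.ofReal_add zero_le_one (by positivity), ENNReal.ofReal_one, add_mul, one_mul,
      ENNReal.add_le_add_iff_left hQ.measure_ne_top] at h2
    have e1 : ENNReal.ofReal (m * (τ / ρ)) * volume Q =
        ENNReal.ofReal τ * (ENNReal.ofReal (m / ρ) * volume Q) := by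
      rw [← mul_assoc, ← ENNReal.ofReal_mul hτ0.le]
      congr 2
      ring
    rw [e1] at h2
    refine (ENNReal.mul_le_mul_iff_right (ENNReal.ofReal_pos.2 hτ0).ne' ENNReal.ofReal_ne_top).1
      (h2.trans_eq ?_)
    rw [Finset.mul_sum]
    refine Finset.sum_congr rfl fun u _ => ?_
    rw [ENNReal.ofReal_mul hτ0.le]
    ring
  have hlim := tendsto_finsetSum U fun u hu => ENNReal.Tendsto.const_mul
    (a := sliceConst u * ENNReal.ofReal (supportFun P u)) (hLlim u hu)
    (Or.inr (ENNReal.mul_ne_top (sliceConst_ne_top u) ENNReal.ofReal_ne_top))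
  have hmain : ENNReal.ofReal (m / ρ) * volume Q ≤ m * volume P := by
    refine (ge_of_tendsto' hlim hstep).trans (le_trans (Finset.sum_le_sum fun u hu => ?_)
      (sum_faceArea_le_volume (by omega) hP hPc hP0 U hU))
    gcongr
    exact (hL u hu).trans (hface u (hU u hu))
  rw [← ENNReal.ofReal_toReal hP.measure_ne_top, ← ENNReal.ofReal_toReal hQ.measure_ne_top,
    ← ENNReal.ofReal_mul (by positivity), ← ENNReal.ofReal_natCast,
    ← ENNReal.ofReal_mul (by positivity), ENNReal.ofReal_le_ofReal_iff (by positivity)] at hmain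
  have hQρ : (volume Q).toReal = ρ ^ m * (volume P).toReal := by
    rw [hρm, div_mul_cancel₀ _ hvP.ne']
  have hle : ρ ^ m ≤ ρ := by
    have h1 : (m : ℝ) / ρ * (ρ ^ m * (volume P).toReal) ≤ m * (volume P).toReal := hQρ ▸ hmain
    have h2 : (m : ℝ) / ρ * (ρ ^ m * (volume P).toReal) =
        (m * (volume P).toReal) * (ρ ^ m / ρ) := by ring
    rw [h2] at h1
    have h3 : ρ ^ m / ρ ≤ 1 :=
      le_of_mul_le_mul_left (by simpa using h1) (by positivity : 0 < m * (volume P).toReal)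
    exact (div_le_one hρ0).1 h3
  have hρ1 : ρ ≤ 1 := by
    by_contra! h
    have := pow_lt_pow_right₀ h (show 1 < m by omega)
    rw [pow_one] at this
    exact absurd hle (not_le.2 this)
  rw [← ENNReal.toReal_le_toReal hQ.measure_ne_top hP.measure_ne_top, hQρ]
  exact mul_le_of_le_one_left hvP.le (pow_le_one₀ hρ0.le hρ1)

theorem faceArea_vadd {m : ℕ} (K : Set (Euc m)) (a u : Euc m) :
    faceArea (a +ᵥ K) u = faceArea K u := by
  have h : faceIn (a +ᵥ K) u = a +ᵥ faceIn K u := by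
    ext x
    simp only [faceIn, mem_vadd_set, mem_ofPred_eq, vadd_eq_add]
    constructor
    · rintro ⟨⟨y, hy, rfl⟩, h⟩
      refine ⟨y, ⟨hy, fun z hz => ?_⟩, rfl⟩
      simpa [inner_add_left] using h _ ⟨z, hz, rfl⟩
    · rintro ⟨y, ⟨hy, h⟩, rfl⟩
      refine ⟨⟨y, hy, rfl⟩, ?_⟩
      rintro _ ⟨z, hz, rfl⟩
      simpa [inner_add_left] using h z hz
  rw [faceArea, faceArea, h]
  exact (IsometryEquiv.addLeft a).hausdorffMeasure_image _ _

theorem IsPolytope.vadd {m : ℕ} {Q : Set (Euc m)} (hQ : IsPolytope Q) (a : Euc m) :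
    IsPolytope (a +ᵥ Q) := by
  classical
  obtain ⟨s, rfl⟩ := hQ
  exact ⟨a +ᵥ s, by rw [Finset.coe_vadd_finset, convexHull_vadd]⟩

/-- if each face of `P` in a common facet-normal direction has
`(m-1)`-volume at least that of the corresponding face of `Q`, then `P` has
larger `m`-volume. -/
theorem volume_monotone_polytopes {m : ℕ} (hm : 2 ≤ m)
    (P Q : Set (Euc m)) (hP : IsPolytope P) (hPbody : IsConvexBody P)
    (hQ : IsPolytope Q) (hQbody : IsConvexBody Q)
    (hface : ∀ u : Euc m, IsFacetNormal P u ∨ IsFacetNormal Q u →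
      faceArea Q u ≤ faceArea P u) :
    volume Q ≤ volume P := by
  obtain ⟨hPc, hPk, p, hp⟩ := hPbody
  obtain ⟨-, hQk, q, hq⟩ := hQbody
  have hzero : ∀ (K : Set (Euc m)) (x : Euc m), x ∈ interior K → 0 ∈ interior (-x +ᵥ K) := by
    intro K x hx
    rw [interior_vadd]
    exact ⟨x, hx, by simp⟩
  have h := volume_le_of_faceArea_le hm (hPk.vadd (-p)) (hPc.vadd (-p)) (hzero P p hp)
    (hQk.vadd (-q)) (hQ.vadd (-q)) (hzero Q q hq) fun u hu => by
      rw [faceArea_vadd, faceArea_vadd]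
      rcases eq_or_ne (faceArea Q u) 0 with h0 | h0
      · simp [h0]
      · exact hface u (Or.inr ⟨hu, pos_iff_ne_zero.2 h0⟩)
  simpa using h
end
end
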